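/- arXiv:1905.08670 — 2 statements merged into one kernel-verified Lean document; each statement's English description precedes it below -/
import Mathlib

section
/- There exists a function f : ℕ → ℕ such that for every finite simple graph G, the minimum size of a feedback vertex set of G is at most f(ava(G)), i.e. τ(G) ≤ f(ava(G)). -/
open Function

section Defs

variable {V : Type*}

/-- The vertex set `S` contains a directed cycle of the digraph `D`, i.e. there is a
closed directed walk of positive length all of whose vertices lie in `S`. -/
def HasDicycle (D : V → V → Prop) (S : Set V) : Prop :=
  ∃ v, Relation.TransGen (fun a b => a ∈ S ∧ b ∈ S ∧ D a b) v v

/-- A coloring of the vertices of the digraph `D` with `k` colors all of whose color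
classes are acyclic. -/
def IsAcyclicColoring (D : V → V → Prop) {k : ℕ} (c : V → Fin k) : Prop :=
  ∀ i, ¬ HasDicycle D (c ⁻¹' {i})

/-- A complete acyclic coloring of the digraph `D` with exactly `k` colors: every color is
used, every color class is acyclic, and the union of any two distinct color classes
contains a directed cycle. -/
def IsCompleteAcyclicColoring (D : V → V → Prop) {k : ℕ} (c : V → Fin k) : Prop :=
  Surjective c ∧ IsAcyclicColoring D c ∧
    ∀ i j : Fin k, i ≠ j → HasDicycle D (c ⁻¹' {i} ∪ c ⁻¹' {j})

/-- The dichromatic number: the minimum number of colors in an acyclic coloring. -/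
noncomputable def dichromaticNumber (D : V → V → Prop) : ℕ :=
  sInf {k | ∃ c : V → Fin k, IsAcyclicColoring D c}

/-- The adichromatic number: the maximum number of colors in a complete acyclic coloring. -/
noncomputable def adichromaticNumber (D : V → V → Prop) : ℕ :=
  sSup {k | ∃ c : V → Fin k, IsCompleteAcyclicColoring D c}

/-- A coloring of the vertices of the graph `G` all of whose color classes induce forests. -/
def IsArborealColoring (G : SimpleGraph V) {k : ℕ} (c : V → Fin k) : Prop :=
  ∀ i, (G.induce (c ⁻¹' {i})).IsAcyclic

/-- A complete arboreal coloring of `G` with exactly `k` colors: every color is used, every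
color class induces a forest, and the union of any two distinct color classes contains a
cycle. -/
def IsCompleteArborealColoring (G : SimpleGraph V) {k : ℕ} (c : V → Fin k) : Prop :=
  Surjective c ∧ IsArborealColoring G c ∧
    ∀ i j : Fin k, i ≠ j → ¬ (G.induce (c ⁻¹' {i} ∪ c ⁻¹' {j})).IsAcyclic

/-- The vertex arboricity: the minimum number of colors in an arboreal coloring. -/
noncomputable def vertexArboricity (G : SimpleGraph V) : ℕ :=
  sInf {k | ∃ c : V → Fin k, IsArborealColoring G c}

/-- The a-vertex arboricity: the maximum number of colors in a complete arboreal coloring. -/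
noncomputable def avertexArboricity (G : SimpleGraph V) : ℕ :=
  sSup {k | ∃ c : V → Fin k, IsCompleteArborealColoring G c}

/-- The minimum size of a directed feedback vertex set of the digraph `D`. -/
noncomputable def digraphFVSNumber [Fintype V] (D : V → V → Prop) : ℕ :=
  sInf {n | ∃ F : Finset V, F.card = n ∧ ¬ HasDicycle D ((↑F : Set V)ᶜ)}

/-- The minimum size of a feedback vertex set of the graph `G`. -/
noncomputable def graphFVSNumber [Fintype V] (G : SimpleGraph V) : ℕ :=
  sInf {n | ∃ F : Finset V, F.card = n ∧ (G.induce ((↑F : Set V)ᶜ)).IsAcyclic}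

/-- A complete coloring in the sense of the diachromatic number: all classes are acyclic
and for every ordered pair `(i, j)` of distinct colors there is an arc with tail colored
`j` and head colored `i`. -/
def IsCompleteDiColoring (D : V → V → Prop) {k : ℕ} (c : V → Fin k) : Prop :=
  Surjective c ∧ IsAcyclicColoring D c ∧
    ∀ i j : Fin k, i ≠ j → ∃ u v, D u v ∧ c u = j ∧ c v = i

/-- The diachromatic number of the digraph `D`. -/
noncomputable def diachromaticNumber (D : V → V → Prop) : ℕ :=
  sSup {k | ∃ c : V → Fin k, IsCompleteDiColoring D c}

/-- A complete proper coloring of the graph `G`: proper, surjective, and any two distinct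
colors appear together on some edge. -/
def IsCompleteProperColoring (G : SimpleGraph V) {k : ℕ} (c : V → Fin k) : Prop :=
  Surjective c ∧ (∀ u v, G.Adj u v → c u ≠ c v) ∧
    ∀ i j : Fin k, i ≠ j → ∃ u v, G.Adj u v ∧ c u = i ∧ c v = j

/-- The achromatic number: the maximum number of colors in a complete proper coloring. -/
noncomputable def achromaticNumber (G : SimpleGraph V) : ℕ :=
  sSup {k | ∃ c : V → Fin k, IsCompleteProperColoring G c}

/-- The subdigraph of `D` induced by the vertex set `S`. -/
def induceDigraph (D : V → V → Prop) (S : Set V) : S → S → Prop :=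
  fun a b => D a.1 b.1

/-- `D` is an orientation of the simple graph `G`: every arc of `D` is an edge of `G`, and
every edge of `G` is given exactly one of its two possible directions. -/
def IsOrientation (G : SimpleGraph V) (D : V → V → Prop) : Prop :=
  (∀ u v, D u v → G.Adj u v) ∧ ∀ u v, G.Adj u v → Xor' (D u v) (D v u)

end Defs

namespace AVA

open Classical in
/-- number of ordered adjacent pairs -/
noncomputable def dd {V : Type} (G : SimpleGraph V) (A B : Finset V) : ℤ :=
  ∑ a ∈ A, ∑ b ∈ B, if G.Adj a b then 1 else 0

/-- twice the excess -/
noncomputable def ex {V : Type} (G : SimpleGraph V) (A : Finset V) : ℤ :=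
  dd G A A - 2 * (A.card : ℤ)

/-- contains a cycle -/
def Cy {V : Type} (G : SimpleGraph V) (S : Finset V) : Prop :=
  ∃ B ⊆ S, B.Nonempty ∧ 0 ≤ ex G B

/-- restriction of a graph to a finite set -/
def rest {V : Type} (G : SimpleGraph V) (S : Finset V) : SimpleGraph V where
  Adj x y := G.Adj x y ∧ x ∈ S ∧ y ∈ S
  symm := ⟨fun _ _ h => ⟨h.1.symm, h.2.2, h.2.1⟩⟩
  loopless := ⟨fun _ h => h.1.ne rfl⟩

section basics
open Classical

variable {V : Type} {G H : SimpleGraph V}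

lemma dd_union_left {A B C : Finset V} (h : Disjoint A B) :
    dd G (A ∪ B) C = dd G A C + dd G B C := by
  unfold dd; rw [Finset.sum_union h]

lemma dd_comm (A B : Finset V) : dd G A B = dd G B A := by
  unfold dd; rw [Finset.sum_comm]; simp only [G.adj_comm]

lemma dd_union_right {A B C : Finset V} (h : Disjoint A B) :
    dd G C (A ∪ B) = dd G C A + dd G C B := by
  rw [dd_comm, dd_union_left h, dd_comm A, dd_comm B]

lemma dd_nonneg (A B : Finset V) : 0 ≤ dd G A B := by
  unfold dd
  exact Finset.sum_nonneg fun a _ => Finset.sum_nonneg fun b _ => by split_ifs <;> simp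

lemma dd_mono {A A' B B' : Finset V} (h : A ⊆ A') (h' : B ⊆ B') : dd G A B ≤ dd G A' B' := by
  unfold dd
  refine (Finset.sum_le_sum_of_subset_of_nonneg h fun a _ _ =>
    Finset.sum_nonneg fun b _ => by split_ifs <;> simp).trans ?_
  exact Finset.sum_le_sum fun a _ => Finset.sum_le_sum_of_subset_of_nonneg h'
    fun b _ _ => by split_ifs <;> simp

lemma dd_mono_graph (h : H ≤ G) (A B : Finset V) : dd H A B ≤ dd G A B := by
  unfold dd
  refine Finset.sum_le_sum fun a _ => Finset.sum_le_sum fun b _ => ?_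
  by_cases h1 : H.Adj a b
  · simp [h1, h h1]
  · simp only [h1, if_false]; split_ifs <;> simp

lemma ex_mono_graph (h : H ≤ G) (A : Finset V) : ex H A ≤ ex G A := by
  unfold ex; linarith [dd_mono_graph h A A]

lemma dd_congr {A B : Finset V} (h : ∀ a ∈ A, ∀ b ∈ B, (H.Adj a b ↔ G.Adj a b)) :
    dd H A B = dd G A B := by
  unfold dd
  exact Finset.sum_congr rfl fun a ha => Finset.sum_congr rfl fun b hb => by simp [h a ha b hb]

@[simp] lemma dd_empty_left (A : Finset V) : dd G ∅ A = 0 := by simp [dd]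
@[simp] lemma dd_empty_right (A : Finset V) : dd G A ∅ = 0 := by simp [dd]
@[simp] lemma ex_empty : ex G ∅ = 0 := by simp [ex]

@[simp] lemma ex_singleton (v : V) : ex G {v} = -2 := by simp [ex, dd]

lemma dd_sing_sing (v w : V) : dd G {v} {w} = if G.Adj v w then 1 else 0 := by
  unfold dd; rw [Finset.sum_singleton, Finset.sum_singleton]

lemma dd_sing (v : V) (A : Finset V) : dd G {v} A = ((A.filter (G.Adj v)).card : ℤ) := by
  simp [dd]

lemma dd_eq_sum (A B : Finset V) : dd G A B = ∑ a ∈ A, dd G {a} B := by simp [dd]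

lemma ex_union {A B : Finset V} (h : Disjoint A B) :
    ex G (A ∪ B) = ex G A + ex G B + 2 * dd G A B := by
  unfold ex
  rw [dd_union_left h, dd_union_right h, dd_union_right h, Finset.card_union_of_disjoint h,
    dd_comm B A]
  push_cast; ring

lemma ex_eq_sum (A : Finset V) : ex G A = ∑ a ∈ A, (dd G {a} A - 2) := by
  unfold ex; rw [dd_eq_sum, Finset.sum_sub_distrib]; simp; ring

lemma ex_insert {A : Finset V} {v : V} (h : v ∉ A) :
    ex G (insert v A) = ex G A - 2 + 2 * dd G {v} A := by
  rw [Finset.insert_eq, ex_union (by simpa using h)]; simp; ring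

lemma dd_sing_erase {A : Finset V} {v : V} : dd G {v} (A.erase v) = dd G {v} A := by
  rw [dd_sing, dd_sing]; congr 2; ext x; simp
  intro h _
  exact h.ne'

lemma ex_erase {A : Finset V} {v : V} (h : v ∈ A) :
    ex G (A.erase v) = ex G A + 2 - 2 * dd G {v} A := by
  have := ex_insert (G := G) (Finset.notMem_erase v A)
  rw [Finset.insert_erase h, dd_sing_erase] at this
  linarith

lemma ex_even (A : Finset V) : (2 : ℤ) ∣ ex G A := by
  induction A using Finset.induction_on with
  | empty => simp
  | insert a s h ih => rw [ex_insert h]; omega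

lemma Cy.mono {S T : Finset V} (h : Cy G S) (hST : S ⊆ T) : Cy G T := by
  obtain ⟨B, hB, h⟩ := h; exact ⟨B, hB.trans hST, h⟩

lemma Cy.mono_graph {S : Finset V} (h : Cy H S) (hl : H ≤ G) : Cy G S := by
  obtain ⟨B, hB, hn, h⟩ := h; exact ⟨B, hB, hn, h.trans (ex_mono_graph hl B)⟩

lemma ex_of_not_cy {S B : Finset V} (h : ¬ Cy G S) (hB : B ⊆ S) (hn : B.Nonempty) :
    ex G B ≤ -2 := by
  have h1 : ¬ 0 ≤ ex G B := fun h' => h ⟨B, hB, hn, h'⟩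
  have := ex_even (G := G) B
  omega

/-- minimal cyclic set: all inner degrees are two -/
lemma exists_min_cyc {S : Finset V} (h : Cy G S) : ∃ C ⊆ S, C.Nonempty ∧ ex G C = 0 ∧
    (∀ v ∈ C, dd G {v} C = 2) ∧ (∀ D ⊂ C, ¬ Cy G D) := by
  obtain ⟨B, hB, hn, h0⟩ := h
  obtain ⟨C, hCB, hC⟩ := exists_minimal_le_of_wellFoundedLT
    (fun C : Finset V => C.Nonempty ∧ 0 ≤ ex G C) B ⟨hn, h0⟩
  have hmin : ∀ D ⊂ C, ¬ Cy G D := by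
    rintro D hD ⟨E, hE, hEn, hE0⟩
    have := hC.2 (y := E) ⟨hEn, hE0⟩ (hE.trans hD.subset)
    exact hD.2 (this.trans hE)
  obtain ⟨hCn, hC0⟩ := hC.1
  have hne1 : ∀ v, C ≠ {v} := by
    rintro v rfl; simp at hC0
  have her : ∀ v ∈ C, ex G C + 2 - 2 * dd G {v} C ≤ -2 := by
    intro v hv
    rw [← ex_erase hv]
    refine ex_of_not_cy (hmin _ (Finset.erase_ssubset hv)) subset_rfl ?_
    rw [Finset.nonempty_iff_ne_empty]
    intro h
    rw [Finset.erase_eq_empty_iff] at h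
    rcases h with h | h
    · simp [h] at hv
    · exact hne1 v h
  have hdeg : ∀ v ∈ C, 2 ≤ dd G {v} C := by
    intro v hv; have := her v hv; omega
  obtain ⟨v, hv, hvmin⟩ := Finset.exists_min_image C (fun v => dd G {v} C) hCn
  have hsum : (C.card : ℤ) * (dd G {v} C - 2) ≤ ex G C := by
    rw [ex_eq_sum, ← nsmul_eq_mul]
    refine Finset.card_nsmul_le_sum _ _ _ fun x hx => ?_
    have := hvmin x hx; linarith
  have hcard : dd G {v} C + 1 ≤ C.card := by
    rw [← dd_sing_erase, dd_sing]
    have := Finset.card_filter_le (C.erase v) (G.Adj v)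
    rw [Finset.card_erase_of_mem hv] at this
    have : 0 < C.card := hCn.card_pos
    omega
  have h1 := her v hv
  have h2 := hdeg v hv
  have hd2 : dd G {v} C = 2 := by
    by_contra hne
    have h3 : 3 ≤ dd G {v} C := by omega
    nlinarith
  have hex : ex G C = 0 := by rw [hd2] at h1; linarith
  refine ⟨C, hCB.trans hB, hCn, hex, ?_, hmin⟩
  rw [ex_eq_sum, Finset.sum_eq_zero_iff_of_nonneg] at hex
  · intro x hx; have := hex x hx; linarith
  · intro x hx; have := hdeg x hx; linarith

lemma ex_nonneg_of_deg {C : Finset V} (h : ∀ v ∈ C, 2 ≤ dd G {v} C) : 0 ≤ ex G C := by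
  rw [ex_eq_sum]; exact Finset.sum_nonneg fun x hx => by linarith [h x hx]

lemma cy_of_cycle {S : Finset V} {v : V} (c : G.Walk v v) (hc : c.IsCycle)
    (hs : ∀ x ∈ c.support, x ∈ S) : Cy G S := by
  refine ⟨c.support.toFinset, fun x hx => hs x (by simpa using hx), ⟨v, by simp⟩,
    ex_nonneg_of_deg fun x hx => ?_⟩
  have h2 := hc.ncard_neighborSet_toSubgraph_eq_two (v := x) (by simpa using hx)
  rw [dd_sing]
  have hsub : c.toSubgraph.neighborSet x ⊆ ((c.support.toFinset.filter (G.Adj x) : Finset V) : Set V) := by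
    intro y hy
    have hy' : c.toSubgraph.Adj x y := hy
    have h3 := hy'.snd_mem
    simp only [SimpleGraph.Walk.mem_verts_toSubgraph] at h3
    simp [h3, hy'.adj_sub]
  have := Set.ncard_le_ncard hsub (Finset.finite_toSet _)
  rw [h2, Set.ncard_coe_finset] at this
  exact_mod_cast this

lemma rest_le (S : Finset V) : rest G S ≤ G := fun _ _ h => h.1

lemma dd_rest {S A B : Finset V} (hA : A ⊆ S) (hB : B ⊆ S) : dd (rest G S) A B = dd G A B :=
  dd_congr fun _ ha _ hb => ⟨fun h => h.1, fun h => ⟨h, hA ha, hB hb⟩⟩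

lemma ex_rest {S A : Finset V} (hA : A ⊆ S) : ex (rest G S) A = ex G A := by
  unfold ex; rw [dd_rest hA hA]

lemma support_rest {S : Finset V} {v : V} (c : (rest G S).Walk v v) (hc : c.IsCycle) :
    ∀ x ∈ c.support, x ∈ S := by
  intro x hx
  have h2 := hc.ncard_neighborSet_toSubgraph_eq_two hx
  have : (c.toSubgraph.neighborSet x).Nonempty := by
    rw [← Set.ncard_pos (Set.finite_of_ncard_ne_zero (by omega))]; omega
  obtain ⟨y, hy⟩ := this
  exact (SimpleGraph.Subgraph.Adj.adj_sub hy).2.1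

lemma exists_cycle_of_cy [Fintype V] {S : Finset V} (h : Cy G S) :
    ∃ (v : V) (c : G.Walk v v), c.IsCycle ∧ ∀ x ∈ c.support, x ∈ S := by
  obtain ⟨C, hCS, ⟨z, hz⟩, -, hdeg, -⟩ := exists_min_cyc h
  suffices h : ¬ (rest G C).IsAcyclic by
    unfold SimpleGraph.IsAcyclic at h
    push Not at h
    obtain ⟨v, c, hc⟩ := h
    refine ⟨v, c.mapLe (rest_le C), hc.mapLe _, ?_⟩
    intro x hx
    rw [SimpleGraph.Walk.support_mapLe_eq_support] at hx
    exact hCS (support_rest c hc x hx)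
  intro hac
  let Q : ℕ → Prop := fun n => ∃ (u w : V) (p : (rest G C).Walk u w), u ∈ C ∧ p.IsPath ∧ p.length = n
  have hQ0 : Q 0 := ⟨z, z, .nil, hz, by simp, rfl⟩
  have hbd : ∀ n, Q n → n ≤ Fintype.card V := by
    rintro n ⟨u, w, p, -, hp, rfl⟩; exact hp.length_lt.le
  have hspec := Nat.findGreatest_spec (P := Q) (Nat.zero_le (Fintype.card V)) hQ0
  obtain ⟨u, w, p, hu, hp, hlen⟩ := hspec
  have hmem : ∀ y, (rest G C).Adj u y → y = p.snd := by
    intro y hy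
    refine hac.eq_snd_of_adj_start hp hy ?_
    by_contra hns
    have hQ : Q (p.length + 1) :=
      ⟨y, w, SimpleGraph.Walk.cons hy.symm p, hy.2.2, hp.cons hns, by simp⟩
    have := Nat.le_findGreatest (hbd _ hQ) hQ
    omega
  have h2 := hdeg u hu
  rw [dd_sing] at h2
  have : (C.filter (G.Adj u)).card ≤ 1 := by
    rw [Finset.card_le_one]
    intro a ha b hb
    simp at ha hb
    rw [hmem a ⟨ha.2, hu, ha.1⟩, hmem b ⟨hb.2, hu, hb.1⟩]
  omega

lemma acyclic_iff [Fintype V] (S : Set V) : (G.induce S).IsAcyclic ↔ ¬ Cy G S.toFinset := by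
  constructor
  · intro h hc
    obtain ⟨v, c, hc, hs⟩ := exists_cycle_of_cy hc
    have hs' : ∀ x ∈ c.support, x ∈ S := fun x hx => by simpa using hs x hx
    refine h (c.induce S hs') ?_
    rw [← SimpleGraph.Walk.isCycle_map_iff_of_injective
      (f := (SimpleGraph.Embedding.induce (G := G) S).toHom) Subtype.val_injective]
    simpa using hc
  · intro h v c hc
    refine h (cy_of_cycle (c.map (SimpleGraph.Embedding.induce (G := G) S).toHom)
      (hc.map Subtype.val_injective) ?_)
    intro x hx
    rw [SimpleGraph.Walk.support_map, List.mem_map] at hx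
    obtain ⟨y, -, rfl⟩ := hx
    simp

end basics


section cubic
open Classical

lemma exists_min_nat {α : Type*} (p : α → Prop) (f : α → ℕ) (h : ∃ a, p a) :
    ∃ a, p a ∧ ∀ b, p b → f a ≤ f b := by
  have hh : ∃ n, ∃ a, p a ∧ f a = n := by
    obtain ⟨a, ha⟩ := h; exact ⟨f a, a, ha, rfl⟩
  obtain ⟨a, ha, hfa⟩ := Nat.find_spec hh
  refine ⟨a, ha, fun b hb => ?_⟩
  rw [hfa]; exact Nat.find_min' hh ⟨b, hb, rfl⟩

/-- disjoint cyclic sets -/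
def Pack {V : Type} (G : SimpleGraph V) (N : ℕ) (S : Finset V) : Prop :=
  ∃ C : ℕ → Finset V, (∀ i < N, C i ⊆ S ∧ Cy G (C i)) ∧
    ∀ i < N, ∀ j < N, i ≠ j → Disjoint (C i) (C j)

variable {V : Type} {H : SimpleGraph V}

lemma find_light (A : Finset V) (h2 : ∀ a ∈ A, 2 ≤ dd H {a} A) (h3 : ∀ a ∈ A, dd H {a} A ≤ 3)
    (hn : 1200000 < ex H A) :
    ∃ B ⊆ A, B.Nonempty ∧ 0 ≤ ex H B ∧ 4 * (dd H B A - 2 * (B.card : ℤ)) ≤ ex H A := by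
  by_contra hcon
  push Not at hcon
  obtain ⟨n, hndef⟩ : ∃ n, n = ex H A := ⟨_, rfl⟩
  rw [← hndef] at hn hcon
  let u : Finset V → ℤ := fun B => dd H B A - 2 * (B.card : ℤ)
  have u_sum : ∀ B, u B = ∑ b ∈ B, (dd H {b} A - 2) := by
    intro B; simp only [u]; rw [dd_eq_sum, Finset.sum_sub_distrib]; simp; ring
  have u_nonneg : ∀ B ⊆ A, 0 ≤ u B := by
    intro B hB; rw [u_sum]
    exact Finset.sum_nonneg fun b hb => by linarith [h2 b (hB hb)]
  have u_union : ∀ B C, Disjoint B C → u (B ∪ C) = u B + u C := by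
    intro B C h; rw [u_sum, u_sum, u_sum, Finset.sum_union h]
  have uA : u A = n := by rw [hndef]; rfl
  have hneg : ∀ B ⊆ A, B.Nonempty → 4 * u B ≤ n → ex H B ≤ -2 := by
    intro B hB hne hu
    have : ¬ 0 ≤ ex H B := fun h => by
      have := hcon B hB hne h
      simp only [u] at hu; linarith
    have := ex_even (G := H) B
    omega
  let P : (V → V) → V → Finset V := fun c i => A.filter (fun a => c a = i)
  let valid : (V → V) → Prop := fun c => ∀ i ∈ A.image c, ex H (P c i) = -2 ∧ 16 * u (P c i) ≤ n
  obtain ⟨c, hc, hmin⟩ := exists_min_nat valid (fun c => (A.image c).card) ⟨id, by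
    intro i hi
    have hiA : i ∈ A := by simpa using hi
    have : P id i = {i} := by ext x; simp [P]; intro h; rwa [h]
    rw [this, ex_singleton]
    refine ⟨rfl, ?_⟩
    rw [u_sum]; simp
    have := h3 i hiA
    linarith⟩
  obtain ⟨I, hI⟩ : ∃ I, I = A.image c := ⟨_, rfl⟩
  let x : V → V → ℤ := fun i j => dd H (P c i) (P c j)
  have PA : ∀ i, P c i ⊆ A := fun i => Finset.filter_subset _ _
  have Pne : ∀ i ∈ I, (P c i).Nonempty := by
    intro i hi
    rw [hI, Finset.mem_image] at hi
    obtain ⟨a, ha, rfl⟩ := hi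
    exact ⟨a, by simp [P, ha]⟩
  have Pdis : ∀ i j, i ≠ j → Disjoint (P c i) (P c j) := by
    intro i j hij
    rw [Finset.disjoint_left]
    intro a ha hb
    simp [P] at ha hb
    exact hij (ha.2.symm.trans hb.2)
  have Pex : ∀ i ∈ I, ex H (P c i) = -2 := fun i hi => (hc i (hI ▸ hi)).1
  have Pu : ∀ i ∈ I, 16 * u (P c i) ≤ n := fun i hi => (hc i (hI ▸ hi)).2
  have xle : ∀ i ∈ I, ∀ j ∈ I, i ≠ j → x i j ≤ 1 := by
    intro i hi j hj hij
    have := hneg (P c i ∪ P c j) (Finset.union_subset (PA i) (PA j)) ((Pne i hi).inl) (by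
      rw [u_union _ _ (Pdis i j hij)]; linarith [Pu i hi, Pu j hj])
    rw [ex_union (Pdis i j hij), Pex i hi, Pex j hj] at this
    simp only [x]; linarith
  have xheavy : ∀ i ∈ I, ∀ j ∈ I, i ≠ j → 1 ≤ x i j → n < 16 * (u (P c i) + u (P c j)) := by
    intro i hi j hj hij hx
    by_contra hle
    push Not at hle
    have hx1 : x i j = 1 := le_antisymm (xle i hi j hj hij) hx
    let c' : V → V := fun v => if c v = j then i else c v
    have him : A.image c' ⊆ I.erase j := by
      intro y hy
      rw [Finset.mem_image] at hy
      obtain ⟨a, ha, rfl⟩ := hy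
      simp only [c']
      split_ifs with h
      · exact Finset.mem_erase.2 ⟨hij, hi⟩
      · exact Finset.mem_erase.2 ⟨h, hI ▸ Finset.mem_image_of_mem c ha⟩
    have hv : valid c' := by
      intro l hl
      have hl' := Finset.mem_erase.1 (him hl)
      by_cases hli : l = i
      · have : P c' l = P c i ∪ P c j := by
          ext a; simp only [P, c', Finset.mem_filter, Finset.mem_union]
          split_ifs with h
          · simp [h, hli]; try tauto
          · simp [h, hli]; try tauto
        rw [this, ex_union (Pdis i j hij), Pex i hi, Pex j hj, u_union _ _ (Pdis i j hij)]
        simp only [x] at hx1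
        rw [hx1]; exact ⟨by norm_num, hle⟩
      · have : P c' l = P c l := by
          ext a; simp only [P, c', Finset.mem_filter]
          split_ifs with h
          · rw [h]; simp [Ne.symm hli, Ne.symm hl'.1]
          · simp
        rw [this]; exact ⟨Pex l hl'.2, Pu l hl'.2⟩
    have h1 := hmin c' hv
    have h4 := Finset.card_le_card him
    rw [Finset.card_erase_of_mem hj] at h4
    have : 0 < I.card := Finset.card_pos.2 ⟨j, hj⟩
    simp only [← hI] at h1
    omega
  have xsum : ∀ i ∈ I, ∑ j ∈ I.erase i, x i j = u (P c i) + 2 := by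
    intro i hi
    have h1 : ∑ j ∈ I, x i j = dd H (P c i) A := by
      simp only [x, dd, P]
      rw [Finset.sum_comm]
      refine Finset.sum_congr rfl fun a _ => ?_
      rw [hI]
      exact Finset.sum_fiberwise_of_maps_to (fun a ha => Finset.mem_image_of_mem c ha) _
    rw [← Finset.add_sum_erase I _ hi] at h1
    have h4 := Pex i hi
    simp only [ex] at h4
    simp only [x, u] at h1 ⊢
    linarith
  have usum : ∑ i ∈ I, u (P c i) = n := by
    rw [← uA, u_sum A, hI]
    simp only [u_sum, P]
    exact Finset.sum_fiberwise_of_maps_to (fun a ha => Finset.mem_image_of_mem c ha) _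
  have uP : ∀ i, 0 ≤ u (P c i) := fun i => u_nonneg _ (PA i)
  let Hv := I.filter (fun i => n < 32 * u (P c i))
  have hHv : Hv.card ≤ 32 := by
    have h1 : (Hv.card : ℤ) * n ≤ ∑ i ∈ Hv, 32 * u (P c i) := by
      rw [← nsmul_eq_mul]
      exact Finset.card_nsmul_le_sum _ _ _ fun i hi => (Finset.mem_filter.1 hi).2.le
    have h4 : ∑ i ∈ Hv, 32 * u (P c i) ≤ ∑ i ∈ I, 32 * u (P c i) :=
      Finset.sum_le_sum_of_subset_of_nonneg (Finset.filter_subset _ _) fun i _ _ => by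
        linarith [uP i]
    have h5 : ∑ i ∈ I, 32 * u (P c i) = 32 * n := by rw [← Finset.mul_sum, usum]
    have : (Hv.card : ℤ) ≤ 32 := by nlinarith
    exact_mod_cast this
  let Lt := I.filter (fun i => ¬ n < 32 * u (P c i))
  have hpair : ∀ i ∈ Lt, ∃ q : V × V, q ∈ Hv ×ˢ Hv ∧ q.1 ≠ q.2 ∧ 1 ≤ x i q.1 ∧ 1 ≤ x i q.2 := by
    intro i hi
    obtain ⟨hiI, hil⟩ := Finset.mem_filter.1 hi
    let Ni := (I.erase i).filter (fun j => 1 ≤ x i j)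
    have hcard : (2 : ℤ) ≤ Ni.card := by
      have h1 : ∑ j ∈ I.erase i, x i j ≤ ∑ j ∈ I.erase i, if 1 ≤ x i j then 1 else 0 := by
        refine Finset.sum_le_sum fun j hj => ?_
        obtain ⟨hji, hjI⟩ := Finset.mem_erase.1 hj
        have := xle i hiI j hjI hji.symm
        split_ifs with h
        · exact this
        · omega
      rw [xsum i hiI, Finset.sum_boole] at h1
      linarith [uP i]
    have : 1 < Ni.card := by omega
    obtain ⟨j, hj, k, hk, hjk⟩ := Finset.one_lt_card.1 this
    have key : ∀ j ∈ Ni, j ∈ Hv ∧ 1 ≤ x i j := by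
      intro j hj
      obtain ⟨hj1, hj2⟩ := Finset.mem_filter.1 hj
      obtain ⟨hji, hjI⟩ := Finset.mem_erase.1 hj1
      have := xheavy i hiI j hjI hji.symm hj2
      exact ⟨Finset.mem_filter.2 ⟨hjI, by linarith⟩, hj2⟩
    exact ⟨(j, k), Finset.mem_product.2 ⟨(key j hj).1, (key k hk).1⟩, hjk, (key j hj).2, (key k hk).2⟩
  choose! q hq1 hq2 hq3 hq4 using hpair
  have hLt : Lt.card ≤ (Hv ×ˢ Hv).card := by
    refine Finset.card_le_card_of_injOn q (fun i hi => hq1 i hi) ?_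
    intro i hi k hk hik
    by_contra hne
    have hi' : i ∈ Lt := hi
    have hk' : k ∈ Lt := hk
    rcases hqi : q i with ⟨a, b⟩
    have e1 := hq1 i hi'; have e2 := hq2 i hi'; have e3 := hq3 i hi'; have e4 := hq4 i hi'
    have f3 := hq3 k hk'; have f4 := hq4 k hk'
    rw [← hik] at f3 f4
    rw [hqi] at e1 e2 e3 e4 f3 f4
    simp only [Finset.mem_product] at e1 e2 e3 e4 f3 f4
    obtain ⟨haI, ha⟩ := Finset.mem_filter.1 e1.1
    obtain ⟨hbI, hb⟩ := Finset.mem_filter.1 e1.2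
    obtain ⟨hiI, hil⟩ := Finset.mem_filter.1 hi'
    obtain ⟨hkI, hkl⟩ := Finset.mem_filter.1 hk'
    have hia : i ≠ a := by rintro rfl; exact hil ha
    have hib : i ≠ b := by rintro rfl; exact hil hb
    have hka : k ≠ a := by rintro rfl; exact hkl ha
    have hkb : k ≠ b := by rintro rfl; exact hkl hb
    have d1 : Disjoint (P c i ∪ P c k) (P c a ∪ P c b) := by
      simp only [Finset.disjoint_union_left, Finset.disjoint_union_right]
      exact ⟨⟨Pdis _ _ hia, Pdis _ _ hka⟩, ⟨Pdis _ _ hib, Pdis _ _ hkb⟩⟩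
    have := hneg ((P c i ∪ P c k) ∪ (P c a ∪ P c b))
      (Finset.union_subset (Finset.union_subset (PA i) (PA k)) (Finset.union_subset (PA a) (PA b)))
      ((Pne i hiI).inl.inl) (by
        rw [u_union _ _ d1, u_union _ _ (Pdis _ _ hne), u_union _ _ (Pdis _ _ e2)]
        linarith [Pu i hiI, Pu k hkI, Pu a haI, Pu b hbI])
    rw [ex_union d1, ex_union (Pdis _ _ hne), ex_union (Pdis _ _ e2), dd_union_left (Pdis _ _ hne),
      dd_union_right (Pdis _ _ e2), dd_union_right (Pdis _ _ e2), Pex i hiI, Pex k hkI, Pex a haI,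
      Pex b hbI] at this
    simp only [x] at e3 e4 f3 f4
    linarith [dd_nonneg (G := H) (P c i) (P c k), dd_nonneg (G := H) (P c a) (P c b)]
  rw [Finset.card_product] at hLt
  have hIc : I.card ≤ 1056 := by
    have : Hv.card + Lt.card = I.card := Finset.card_filter_add_card_filter_not _
    nlinarith
  have hfin : n ≤ (I.card : ℤ) * I.card := by
    have h1 : ∑ i ∈ I, ∑ j ∈ I.erase i, x i j ≤ ∑ i ∈ I, (I.card : ℤ) := by
      refine Finset.sum_le_sum fun i hi => ?_
      have : ∑ j ∈ I.erase i, x i j ≤ ∑ j ∈ I.erase i, 1 :=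
        Finset.sum_le_sum fun j hj => xle i hi j (Finset.mem_of_mem_erase hj)
          (Finset.ne_of_mem_erase hj).symm
      refine this.trans ?_
      simp
      exact Finset.card_le_card (Finset.erase_subset _ _)
    rw [Finset.sum_congr rfl xsum, Finset.sum_add_distrib, usum] at h1
    simp at h1
    have : (0 : ℤ) ≤ I.card := by positivity
    linarith
  have : (I.card : ℤ) ≤ 1056 := by exact_mod_cast hIc
  nlinarith

lemma pack_cubic (N : ℕ) : ∃ s : ℤ, ∀ (V : Type) (H : SimpleGraph V),
    (∀ v B, dd H {v} B ≤ 3) → ∀ A, s ≤ ex H A → Pack H N A := by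
  induction N with
  | zero => exact ⟨0, fun V H _ A _ => ⟨fun _ => ∅, by simp, by simp⟩⟩
  | succ N ih =>
    obtain ⟨s, hs⟩ := ih
    refine ⟨max (2 * s) 1200001, fun V H h3 A hA => ?_⟩
    obtain ⟨A', hA'A, hA'⟩ := exists_minimal_le_of_wellFoundedLT
      (fun A' : Finset V => max (2 * s) 1200001 ≤ ex H A') A hA
    have h2 : ∀ a ∈ A', 2 ≤ dd H {a} A' := by
      intro a ha
      by_contra hlt
      push Not at hlt
      have := hA'.2 (y := A'.erase a) (by
        show _ ≤ ex H (A'.erase a)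
        rw [ex_erase ha]; have := hA'.1; linarith) (Finset.erase_subset _ _)
      exact Finset.notMem_erase a A' (this ha)
    obtain ⟨B, hBA, hBn, hB0, hB4⟩ := find_light A' h2 (fun a _ => h3 a _)
      (by have := (le_max_right _ _).trans hA'.1; linarith)
    have hdis : Disjoint B (A' \ B) := Finset.disjoint_sdiff
    have hun : B ∪ (A' \ B) = A' := Finset.union_sdiff_of_subset hBA
    have e1 := ex_union (G := H) hdis
    have e2 := dd_union_right (G := H) (C := B) hdis
    rw [hun] at e1 e2
    have e3 := dd_nonneg (G := H) B (A' \ B)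
    have hge : s ≤ ex H (A' \ B) := by
      have := (le_max_left _ _).trans hA'.1
      have e5 : ex H B = dd H B B - 2 * B.card := rfl
      linarith
    obtain ⟨C, hC1, hC2⟩ := hs V H h3 _ hge
    refine ⟨fun i => if i = N then B else C i, ?_, ?_⟩
    · intro i hi
      dsimp only
      split_ifs with h
      · exact ⟨hBA.trans hA'A, B, subset_rfl, hBn, hB0⟩
      · have := hC1 i (by omega)
        exact ⟨this.1.trans (Finset.sdiff_subset.trans hA'A), this.2⟩
    · intro i hi j hj hij
      dsimp only
      split_ifs with h h' h'
      · omega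
      · exact hdis.mono_right (hC1 j (by omega)).1
      · exact (hdis.mono_right (hC1 i (by omega)).1).symm
      · exact hC2 i (by omega) j (by omega) hij

end cubic

section ep
open Classical

variable {V : Type} {G H K : SimpleGraph V}

lemma pack_of_finset {ι : Type} {N : ℕ} (s : Finset ι) (hN : N ≤ s.card) (F : ι → Finset V)
    (h1 : ∀ i ∈ s, Cy G (F i)) (h2 : ∀ i ∈ s, ∀ j ∈ s, i ≠ j → Disjoint (F i) (F j))
    (S : Finset V) (h3 : ∀ i ∈ s, F i ⊆ S) : Pack G N S := by
  let e := s.equivFin.symm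
  refine ⟨fun i => if h : i < N then F (e ⟨i, by omega⟩).1 else ∅, ?_, ?_⟩
  · intro i hi
    simp only [hi, dif_pos]
    exact ⟨h3 _ (e _).2, h1 _ (e _).2⟩
  · intro i hi j hj hij
    simp only [hi, hj, dif_pos]
    refine h2 _ (e _).2 _ (e _).2 fun h => hij ?_
    have := e.injective (Subtype.ext h)
    simpa using this

lemma dd_sup (h : ∀ x y, H.Adj x y → ¬ K.Adj x y) (A B : Finset V) :
    dd (H ⊔ K) A B = dd H A B + dd K A B := by
  unfold dd
  rw [← Finset.sum_add_distrib]
  refine Finset.sum_congr rfl fun a _ => ?_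
  rw [← Finset.sum_add_distrib]
  refine Finset.sum_congr rfl fun b _ => ?_
  by_cases h1 : H.Adj a b
  · simp [h1, h a b h1]
  · simp [h1]

lemma dd_edge_sing (x y v : V) (B : Finset V) :
    dd (SimpleGraph.edge x y) {v} B ≤ if v = x ∨ v = y then 1 else 0 := by
  obtain ⟨E, hE, hE2⟩ : ∃ E, E = SimpleGraph.edge x y ∧
    ∀ a b, E.Adj a b ↔ (a = x ∧ b = y ∨ a = y ∧ b = x) ∧ a ≠ b :=
    ⟨_, rfl, fun a b => SimpleGraph.edge_adj x y a b⟩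
  rw [← hE, dd_sing]
  split_ifs with h
  · have : (B.filter (E.Adj v)).card ≤ 1 := by
      rw [Finset.card_le_one]
      intro a ha b hb
      simp only [Finset.mem_filter, hE2] at ha hb
      grind
    exact_mod_cast this
  · have : B.filter (E.Adj v) = ∅ := by
      ext a; simp [hE2]; grind
    rw [this]; simp

lemma dd_edge {x y : V} (hxy : x ≠ y) {A : Finset V} (hx : x ∈ A) (hy : y ∈ A) :
    2 ≤ dd (SimpleGraph.edge x y) A A := by
  have h : ({x, y} : Finset V) ⊆ A := by
    intro z; simp; rintro (rfl | rfl) <;> assumption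
  refine le_trans ?_ (dd_mono h h)
  unfold dd
  rw [Finset.sum_pair hxy, Finset.sum_pair hxy, Finset.sum_pair hxy]
  simp [SimpleGraph.edge_adj, hxy, hxy.symm]

/-- candidate subcubic subgraph -/
def Cand (G H : SimpleGraph V) (A : Finset V) : Prop :=
  H ≤ G ∧ (∀ x y, H.Adj x y → x ∈ A ∧ y ∈ A) ∧ ∀ v B, dd H {v} B ≤ 3

lemma nopath {m : ℤ} (hm : ∀ H A, Cand G H A → ex H A ≤ m) {x b : V} (p : G.Walk x b) :
    ∀ H A, Cand G H A → ex H A = m → p.IsPath → x ∈ A → b ∈ A → b ≠ x →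
    (∀ v ∈ p.support, v ∈ A → ∀ B, dd H {v} B ≤ 2) → ¬ H.Adj x p.snd → False := by
  induction p with
  | nil => intro H A _ _ _ _ _ h; exact absurd rfl h
  | @cons x y b h p ih =>
    intro H A hC hex hp hx hb hbx hdeg hadj
    rw [SimpleGraph.Walk.snd_cons] at hadj
    rw [SimpleGraph.Walk.cons_isPath_iff] at hp
    have hK : ∀ u v, H.Adj u v → ¬ (SimpleGraph.edge x y).Adj u v := by
      intro u v huv he
      rw [SimpleGraph.edge_adj] at he
      rcases he.1 with ⟨rfl, rfl⟩ | ⟨rfl, rfl⟩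
      · exact hadj huv
      · exact hadj huv.symm
    have hle : H ⊔ SimpleGraph.edge x y ≤ G := by
      intro u v huv
      rcases huv with h1 | h1
      · exact hC.1 h1
      · rw [SimpleGraph.edge_adj] at h1
        rcases h1.1 with ⟨rfl, rfl⟩ | ⟨rfl, rfl⟩
        · exact h
        · exact h.symm
    have hdx : ∀ B, dd H {x} B ≤ 2 := hdeg x (by simp) hx
    have hdy : ∀ B, dd H {y} B ≤ 2 := by
      intro B
      by_cases hy : y ∈ A
      · exact hdeg y (by simp) hy B
      · have : B.filter (H.Adj y) = ∅ := by
          ext a; simp; intro _ ha; exact hy (hC.2.1 _ _ ha).1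
        rw [dd_sing, this]; simp
    have h3 : ∀ v B, dd (H ⊔ SimpleGraph.edge x y) {v} B ≤ 3 := by
      intro v B
      rw [dd_sup hK]
      have := dd_edge_sing x y v B
      split_ifs at this with h1
      · rcases h1 with rfl | rfl
        · linarith [hdx B]
        · linarith [hdy B]
      · linarith [hC.2.2 v B]
    have hC' : Cand G (H ⊔ SimpleGraph.edge x y) (insert y A) := by
      refine ⟨hle, ?_, h3⟩
      intro u v huv
      rcases huv with h1 | h1
      · exact ⟨Finset.mem_insert_of_mem (hC.2.1 _ _ h1).1, Finset.mem_insert_of_mem (hC.2.1 _ _ h1).2⟩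
      · rw [SimpleGraph.edge_adj] at h1
        rcases h1.1 with ⟨rfl, rfl⟩ | ⟨rfl, rfl⟩ <;> simp [hx]
    have hex' : ex (H ⊔ SimpleGraph.edge x y) (insert y A) ≥ ex H (insert y A) + 2 := by
      unfold ex
      rw [dd_sup hK]
      have := dd_edge h.ne (A := insert y A) (by simp [hx]) (by simp)
      linarith
    have hle' := hm _ _ hC'
    by_cases hy : y ∈ A
    · rw [Finset.insert_eq_of_mem hy] at hex' hle'
      linarith
    · have e1 := ex_insert (G := H) hy
      have e2 := dd_nonneg (G := H) {y} A
      refine ih _ _ hC' (by linarith) hp.1 (by simp) (by simp [hb]) (fun h => hy (h ▸ hb)) ?_ ?_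
      · intro v hv hvA B
        have hvx : v ≠ x := fun h => hp.2 (h ▸ hv)
        rw [dd_sup hK]
        have := dd_edge_sing x y v B
        by_cases hvy : v = y
        · subst hvy
          have : B.filter (H.Adj v) = ∅ := by
            ext a; simp; intro _ ha; exact hy (hC.2.1 _ _ ha).1
          rw [dd_sing (G := H), this]; simp at *; omega
        · simp [hvy, hvx] at this
          have h5 := hdeg v (by simp [hv]) (by simpa [hvy] using hvA) B
          linarith
      · intro h1
        rcases h1 with h1 | h1
        · exact hy (hC.2.1 _ _ h1).1
        · rw [SimpleGraph.edge_adj] at h1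
          have : p.snd = x := by grind
          exact hp.2 (this ▸ SimpleGraph.Walk.getVert_mem_support _ _)

lemma allH {m : ℤ} (hm : ∀ H A, Cand G H A → ex H A ≤ m) {H : SimpleGraph V} {A : Finset V}
    (hC : Cand G H A) (hex : ex H A = m) {x b : V} (p : G.Walk x b) :
    p.IsPath → x ∈ A → b ∈ A →
    (∀ v ∈ p.support, v ∈ A → ∀ B, dd H {v} B ≤ 2) → ∀ e ∈ p.edges, e ∈ H.edgeSet := by
  induction p with
  | nil => simp
  | @cons x y b h p ih =>
    intro hp hx hb hdeg
    have hp' := hp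
    rw [SimpleGraph.Walk.cons_isPath_iff] at hp'
    have hbx : b ≠ x := fun h => hp'.2 (h ▸ p.end_mem_support)
    by_cases hadj : H.Adj x y
    · intro e he
      rw [SimpleGraph.Walk.edges_cons, List.mem_cons] at he
      rcases he with rfl | he
      · exact hadj
      · exact ih hp'.1 (hC.2.1 _ _ hadj).2 hb (fun v hv => hdeg v (by simp [hv])) e he
    · exact (nopath hm _ H A hC hex hp hx hb hbx hdeg (by simpa using hadj)).elim

lemma prune (hC : Cand G H A) : ∃ H' A', Cand G H' A' ∧ ex H A ≤ ex H' A' ∧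
    ∀ a ∈ A', 2 ≤ dd H' {a} A' := by
  obtain ⟨A', hA'A, hA'⟩ := exists_minimal_le_of_wellFoundedLT
      (fun A' : Finset V => ex H A ≤ ex H A') A le_rfl
  refine ⟨rest H A', A', ⟨(rest_le A').trans hC.1, fun x y h => h.2, fun v B =>
    (dd_mono_graph (rest_le A') _ _).trans (hC.2.2 v B)⟩, ?_, ?_⟩
  · rw [ex_rest subset_rfl]; exact hA'.1
  · intro a ha
    rw [dd_rest (by simpa using ha) subset_rfl]
    by_contra hlt
    push Not at hlt
    have := hA'.2 (y := A'.erase a) (by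
      show _ ≤ ex H (A'.erase a)
      rw [ex_erase ha]; have := hA'.1; linarith) (Finset.erase_subset _ _)
    exact Finset.notMem_erase a A' (this ha)

theorem erdos_posa (N : ℕ) : ∃ b : ℕ, ∀ (V : Type) [Fintype V] (G : SimpleGraph V),
    Pack G N Finset.univ ∨ ∃ X : Finset V, X.card ≤ b ∧ ¬ Cy G Xᶜ := by
  obtain ⟨s, hs⟩ := pack_cubic N
  refine ⟨s.toNat + N + N, fun V _ G => ?_⟩
  by_cases hpk : Pack G N Finset.univ
  · exact Or.inl hpk
  right
  -- maximal excess
  obtain ⟨m, hm, H0, A0, hC0, hex0⟩ : ∃ m : ℤ, (∀ H A, Cand G H A → ex H A ≤ m) ∧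
      ∃ H A, Cand G H A ∧ ex H A = m := by
    let T := {q : SimpleGraph V × Finset V // Cand G q.1 q.2}
    have : Nonempty T := ⟨⟨(⊥, ∅), bot_le, by simp, fun v B => by rw [dd_sing]; simp⟩⟩
    obtain ⟨q, hq⟩ := Finite.exists_max (fun q : T => ex q.1.1 q.1.2)
    exact ⟨_, fun H A h => hq ⟨(H, A), h⟩, _, _, q.2, rfl⟩
  obtain ⟨H, A, hC, hex, hP, hmax⟩ : ∃ H A, Cand G H A ∧ ex H A = m ∧
      (∀ a ∈ A, 2 ≤ dd H {a} A) ∧ ∀ H' A', Cand G H' A' → ex H' A' = m →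
      (∀ a ∈ A', 2 ≤ dd H' {a} A') → A'.card ≤ A.card := by
    let T := {q : SimpleGraph V × Finset V // Cand G q.1 q.2 ∧ ex q.1 q.2 = m ∧
      ∀ a ∈ q.2, 2 ≤ dd q.1 {a} q.2}
    have : Nonempty T := by
      obtain ⟨H', A', h1, h2, h3⟩ := prune hC0
      exact ⟨⟨(H', A'), h1, le_antisymm (hm _ _ h1) (hex0 ▸ h2), h3⟩⟩
    obtain ⟨q, hq⟩ := Finite.exists_max (fun q : T => q.1.2.card)
    exact ⟨_, _, q.2.1, q.2.2.1, q.2.2.2, fun H' A' h1 h2 h3 => hq ⟨(H', A'), h1, h2, h3⟩⟩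
  have hms : m < s := by
    by_contra hle
    push Not at hle
    obtain ⟨C, hC1, hC2⟩ := hs V H hC.2.2 A (by linarith)
    exact hpk ⟨C, fun i hi => ⟨Finset.subset_univ _, (hC1 i hi).2.mono_graph hC.1⟩, hC2⟩
  have ddA : ∀ v B, dd H {v} B ≤ dd H {v} A := by
    intro v B
    rw [dd_sing, dd_sing]
    have : B.filter (H.Adj v) ⊆ A.filter (H.Adj v) := by
      intro w hw
      rw [Finset.mem_filter] at hw ⊢
      exact ⟨(hC.2.1 _ _ hw.2).2, hw.2⟩
    exact_mod_cast Finset.card_le_card this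
  let U := A.filter (fun a => dd H {a} A = 3)
  have hU : (U.card : ℤ) = m := by
    rw [← hex, ex_eq_sum, Finset.card_filter]
    push_cast
    refine Finset.sum_congr rfl fun a ha => ?_
    have h1 := hP a ha
    have h2 := hC.2.2 a A
    split_ifs <;> omega
  have deg2 : ∀ v ∈ A, v ∉ U → ∀ B, dd H {v} B ≤ 2 := by
    intro v hv hvU B
    have h1 := ddA v B
    have h2 := hC.2.2 v A
    have h3 : dd H {v} A ≠ 3 := fun h => hvU (Finset.mem_filter.2 ⟨hv, h⟩)
    omega
  have noC : ¬ Cy G Aᶜ := by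
    intro h
    obtain ⟨C, hCA, hCn, hC0, hC2, -⟩ := exists_min_cyc h
    have hdis : Disjoint A C := by
      rw [Finset.disjoint_left]; intro a ha hc; simpa [ha] using hCA hc
    have hK : ∀ x y, H.Adj x y → ¬ (rest G C).Adj x y := by
      intro x y h1 h2
      exact Finset.disjoint_left.1 hdis (hC.2.1 _ _ h1).1 h2.2.1
    have r0 : ∀ v B, v ∉ C → dd (rest G C) {v} B = 0 := by
      intro v B hv
      rw [dd_sing]
      have : B.filter ((rest G C).Adj v) = ∅ := by
        ext a; simp; intro _ ha; exact hv ha.2.1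
      rw [this]; simp
    have h0 : ∀ v B, v ∉ A → dd H {v} B = 0 := by
      intro v B hv
      rw [dd_sing]
      have : B.filter (H.Adj v) = ∅ := by
        ext a; simp; intro _ ha; exact hv (hC.2.1 _ _ ha).1
      rw [this]; simp
    have rC : ∀ v ∈ C, ∀ B, dd (rest G C) {v} B ≤ 2 := by
      intro v hv B
      rw [← hC2 v hv, dd_sing, dd_sing]
      have : B.filter ((rest G C).Adj v) ⊆ C.filter (G.Adj v) := by
        intro w hw
        rw [Finset.mem_filter] at hw ⊢
        exact ⟨hw.2.2.2, hw.2.1⟩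
      exact_mod_cast Finset.card_le_card this
    have hsub1 : A ⊆ A ∪ C := Finset.subset_union_left
    have hsub2 : C ⊆ A ∪ C := Finset.subset_union_right
    have hd : ∀ v ∈ A ∪ C, 2 ≤ dd (H ⊔ rest G C) {v} (A ∪ C) := by
      intro v hv
      rw [dd_sup hK]
      rcases Finset.mem_union.1 hv with hv | hv
      · have := hP v hv
        have := dd_mono (G := H) (subset_refl {v}) hsub1
        have := dd_nonneg (G := rest G C) {v} (A ∪ C)
        linarith
      · have := hC2 v hv
        rw [← dd_rest (S := C) (by simpa using hv) subset_rfl] at this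
        have := dd_mono (G := rest G C) (subset_refl {v}) hsub2
        have := dd_nonneg (G := H) {v} (A ∪ C)
        linarith
    have hcand : Cand G (H ⊔ rest G C) (A ∪ C) := by
      refine ⟨sup_le hC.1 (rest_le C), ?_, ?_⟩
      · intro x y hxy
        rcases hxy with h1 | h1
        · exact ⟨hsub1 (hC.2.1 _ _ h1).1, hsub1 (hC.2.1 _ _ h1).2⟩
        · exact ⟨hsub2 h1.2.1, hsub2 h1.2.2⟩
      · intro v B
        rw [dd_sup hK]
        by_cases hv : v ∈ C
        · rw [h0 v B (Finset.disjoint_right.1 hdis hv)]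
          linarith [rC v hv B]
        · rw [r0 v B hv]; linarith [hC.2.2 v B]
    have hexm : ex (H ⊔ rest G C) (A ∪ C) = m := by
      refine le_antisymm (hm _ _ hcand) ?_
      rw [ex_union hdis, ← hex]
      have e1 := ex_mono_graph (le_sup_left : H ≤ H ⊔ rest G C) A
      have e2 := ex_mono_graph (le_sup_right : rest G C ≤ H ⊔ rest G C) C
      rw [ex_rest subset_rfl, hC0] at e2
      have e3 := dd_nonneg (G := H ⊔ rest G C) A C
      linarith
    have := hmax _ _ hcand hexm hd
    rw [Finset.card_union_of_disjoint hdis] at this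
    have := hCn.card_pos
    omega
  -- attached cycles
  let Z := (A \ U).filter (fun z => Cy G (insert z Aᶜ))
  have hZ : Z.card < N := by
    by_contra hle
    push Not at hle
    refine hpk ?_
    have : ∀ z ∈ Z, ∃ F : Finset V, Cy G F ∧ F ⊆ insert z Aᶜ ∧
        ∀ w ∈ F, ∃ q : G.Walk z w, ∀ x ∈ q.support, x ∈ insert z Aᶜ := by
      intro z hz
      obtain ⟨v, c, hc, hcs⟩ := exists_cycle_of_cy (Finset.mem_filter.1 hz).2
      have hzc : z ∈ c.support := by
        by_contra hn
        refine noC (cy_of_cycle c hc fun x hx => ?_)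
        have := hcs x hx
        rw [Finset.mem_insert] at this
        rcases this with rfl | h
        · exact absurd hx hn
        · exact h
      refine ⟨c.support.toFinset, cy_of_cycle c hc (by simp), ?_, ?_⟩
      · intro x hx; exact hcs x (by simpa using hx)
      · intro w hw
        have hw' : w ∈ (c.rotate z hzc).support := by
          rw [SimpleGraph.Walk.mem_support_rotate_iff]; simpa using hw
        refine ⟨(c.rotate z hzc).takeUntil w hw', fun x hx => hcs x ?_⟩
        rw [← SimpleGraph.Walk.mem_support_rotate_iff c z hzc]
        exact SimpleGraph.Walk.support_takeUntil_subset_support _ _ hx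
    choose! F hF1 hF2 hF3 using this
    refine pack_of_finset Z hle F hF1 ?_ _ (fun _ _ => Finset.subset_univ _)
    intro z hz z' hz' hne
    rw [Finset.disjoint_left]
    intro w hw hw'
    obtain ⟨q, hq⟩ := hF3 z hz w hw
    obtain ⟨q', hq'⟩ := hF3 z' hz' w hw'
    have hzA := Finset.mem_sdiff.1 (Finset.mem_filter.1 hz).1
    have hzA' := Finset.mem_sdiff.1 (Finset.mem_filter.1 hz').1
    let p := (q.append q'.reverse).bypass
    have hpe : ∀ e ∈ p.edges, e ∈ q.edges ∨ e ∈ q'.edges := by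
      intro e he
      have := SimpleGraph.Walk.edges_bypass_subset_edges _ he
      simpa using this
    have hps : ∀ e ∈ p.support, e ∈ q.support ∨ e ∈ q'.support := by
      intro e he
      have := SimpleGraph.Walk.support_bypass_subset_support _ he
      simpa using this
    have hsA : ∀ e ∈ p.support, e ∈ A → e = z ∨ e = z' := by
      intro e he heA
      rcases hps e he with h | h
      · have := hq e h; simp [heA] at this; exact Or.inl this
      · have := hq' e h; simp [heA] at this; exact Or.inr this
    refine nopath hm p H A hC hex (SimpleGraph.Walk.bypass_isPath _) hzA.1 hzA'.1 hne.symm ?_ ?_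
    · intro v hv hvA
      rcases hsA v hv hvA with rfl | rfl
      · exact deg2 _ hzA.1 hzA.2
      · exact deg2 _ hzA'.1 hzA'.2
    · intro hadj
      have h1 := hsA _ (SimpleGraph.Walk.getVert_mem_support p 1) (hC.2.1 _ _ hadj).2
      rcases h1 with h1 | h1
      · exact hadj.ne h1.symm
      · have hnil : ¬ p.Nil := SimpleGraph.Walk.not_nil_of_ne hne
        have h2 := SimpleGraph.Walk.mk_start_snd_mem_edges hnil
        have h1' : p.snd = z' := h1
        rw [h1'] at h2
        rcases hpe _ h2 with h | h
        · have := hq z' (SimpleGraph.Walk.snd_mem_support_of_mem_edges _ h)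
          simp [hzA'.1] at this
          exact hne this.symm
        · have := hq' z (SimpleGraph.Walk.fst_mem_support_of_mem_edges _ h)
          simp [hzA.1] at this
          exact hne this
  let DD := (Finset.univ : Finset (Finset V)).filter (fun C => C ⊆ A \ U ∧ C.Nonempty ∧
    0 ≤ ex H C ∧ (∀ v ∈ C, dd H {v} C = 2) ∧ ∀ D ⊂ C, ¬ Cy H D)
  have hDD : DD.card < N := by
    by_contra hle
    push Not at hle
    refine hpk (pack_of_finset DD hle id ?_ ?_ _ (fun _ _ => Finset.subset_univ _))
    · intro C hCD
      obtain ⟨-, h1, h2, h3, h4, h5⟩ := Finset.mem_filter.1 hCD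
      exact Cy.mono_graph ⟨C, subset_rfl, h2, h3⟩ hC.1
    · intro C hCD C' hCD' hne
      obtain ⟨-, h1, h2, h3, h4, h5⟩ := Finset.mem_filter.1 hCD
      obtain ⟨-, h1', h2', h3', h4', h5'⟩ := Finset.mem_filter.1 hCD'
      by_contra hnd
      obtain ⟨w, hw⟩ : (C ∩ C').Nonempty := by
        rw [Finset.nonempty_iff_ne_empty]
        intro h; exact hnd (Finset.disjoint_iff_inter_eq_empty.2 h)
      have hcy : Cy H (C ∩ C') := by
        refine ⟨_, subset_rfl, ⟨w, hw⟩, ex_nonneg_of_deg fun v hv => ?_⟩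
        obtain ⟨hv1, hv2⟩ := Finset.mem_inter.1 hv
        have e1 := h4 v hv1
        have e2 := h4' v hv2
        have hvA := Finset.mem_sdiff.1 (h1 hv1)
        have e3 := deg2 v hvA.1 hvA.2 (C ∪ C')
        rw [dd_sing] at e1 e2 e3 ⊢
        rw [Finset.filter_union] at e3
        have e5 := Finset.card_union_add_card_inter (C.filter (H.Adj v)) (C'.filter (H.Adj v))
        rw [← Finset.filter_inter_distrib] at e5
        omega
      refine hne (subset_antisymm ?_ ?_)
      · by_contra hn
        refine h5 (C ∩ C') ⟨Finset.inter_subset_left, fun h => hn ?_⟩ hcy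
        exact fun a ha => (Finset.mem_inter.1 (h ha)).2
      · by_contra hn
        refine h5' (C ∩ C') ⟨Finset.inter_subset_right, fun h => hn ?_⟩ hcy
        exact fun a ha => (Finset.mem_inter.1 (h ha)).1
  have hr : ∀ C ∈ DD, ∃ r, r ∈ C := fun C hCD => (Finset.mem_filter.1 hCD).2.2.1
  by_cases hne : Nonempty V
  swap
  · exact ⟨∅, by simp, fun ⟨B, _, ⟨x, _⟩, _⟩ => hne ⟨x⟩⟩
  choose! r hr using hr
  refine ⟨U ∪ Z ∪ DD.image r, ?_, ?_⟩
  · have h1 := Finset.card_union_le (U ∪ Z) (DD.image r)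
    have h2 := Finset.card_union_le U Z
    have h3 : (DD.image r).card ≤ DD.card := Finset.card_image_le
    omega
  intro hcy
  obtain ⟨v, c, hc, hcs⟩ := exists_cycle_of_cy hcy
  have hcs' : ∀ x ∈ c.support, x ∉ U ∧ x ∉ Z ∧ x ∉ DD.image r := by
    intro x hx
    have := hcs x hx
    rw [Finset.mem_compl, Finset.mem_union, Finset.mem_union] at this
    tauto
  have hA : ∃ a ∈ c.support, a ∈ A := by
    by_contra hn
    push Not at hn
    exact noC (cy_of_cycle c hc fun x hx => by simpa using hn x hx)
  obtain ⟨a, hac, haA⟩ := hA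
  obtain ⟨c', hc', hcs''⟩ : ∃ c' : G.Walk a a, c'.IsCycle ∧ ∀ x ∈ c'.support, x ∈ c.support :=
    ⟨c.rotate a hac, hc.rotate hac, fun x hx =>
      (SimpleGraph.Walk.mem_support_rotate_iff c a hac).1 hx⟩
  have hB : ∃ b ∈ c'.support, b ∈ A ∧ b ≠ a := by
    by_contra hn
    push Not at hn
    refine (hcs' a hac).2.1 (Finset.mem_filter.2 ⟨Finset.mem_sdiff.2 ⟨haA, (hcs' a hac).1⟩,
      cy_of_cycle c' hc' fun x hx => ?_⟩)
    by_cases hxA : x ∈ A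
    · simp [hn x hx hxA]
    · simp [hxA]
  obtain ⟨b, hb, hbA, hba⟩ := hB
  have hdeg : ∀ v ∈ c'.support, v ∈ A → ∀ B, dd H {v} B ≤ 2 := fun v hv hvA =>
    deg2 v hvA (hcs' v (hcs'' v hv)).1
  have hedge : ∀ e ∈ c'.edges, e ∈ H.edgeSet := by
    cases c' with
    | nil => exact absurd hc' SimpleGraph.Walk.IsCycle.not_of_nil
    | @cons _ y _ h p =>
      rw [SimpleGraph.Walk.cons_isCycle_iff] at hc'
      have hbp : b ∈ p.support := by simpa [hba] using hb
      have hay : H.Adj a y := by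
        by_contra hn
        refine nopath hm (SimpleGraph.Walk.cons h (p.takeUntil b hbp)) H A hC hex ?_ haA hbA hba ?_
          (by simpa using hn)
        · rw [SimpleGraph.Walk.cons_isPath_iff]
          exact ⟨hc'.1.takeUntil hbp,
            SimpleGraph.Walk.endpoint_notMem_support_takeUntil hc'.1 hbp hba.symm⟩
        · intro v hv
          refine hdeg v ?_
          rw [SimpleGraph.Walk.support_cons, List.mem_cons] at hv ⊢
          rcases hv with hv | hv
          · exact Or.inl hv
          · exact Or.inr (SimpleGraph.Walk.support_takeUntil_subset_support _ _ hv)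
      intro e he
      rw [SimpleGraph.Walk.edges_cons, List.mem_cons] at he
      rcases he with rfl | he
      · exact hay
      · exact allH hm hC hex p hc'.1 (hC.2.1 _ _ hay).2 haA
          (fun v hv => hdeg v (by simp [hv])) e he
  have hcyH : Cy H (U ∪ Z ∪ DD.image r)ᶜ := by
    refine cy_of_cycle (c'.transfer H hedge) (hc'.transfer hedge) fun x hx => ?_
    rw [SimpleGraph.Walk.support_transfer] at hx
    exact hcs x (hcs'' x hx)
  obtain ⟨C, hCX, hCn, hC0', hC2, hCm⟩ := exists_min_cyc hcyH
  have hCD : C ∈ DD := by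
    refine Finset.mem_filter.2 ⟨Finset.mem_univ _, ?_, hCn, hC0'.ge, hC2, hCm⟩
    intro x hx
    have h1 := hC2 x hx
    have h2 := hCX hx
    rw [Finset.mem_compl, Finset.mem_union, Finset.mem_union] at h2
    push Not at h2
    refine Finset.mem_sdiff.2 ⟨?_, h2.1.1⟩
    rw [dd_sing] at h1
    obtain ⟨y, hy⟩ : (C.filter (H.Adj x)).Nonempty := by
      rw [← Finset.card_pos]; omega
    exact (hC.2.1 _ _ (Finset.mem_filter.1 hy).2).1
  have h1 := hCX (hr C hCD)
  rw [Finset.mem_compl] at h1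
  exact h1 (Finset.mem_union_right _ (Finset.mem_image_of_mem r hCD))

end ep

section ramsey
open Classical

lemma ramsey_fin : ∀ m p q : ℕ, p + q = m → ∃ n : ℕ, ∀ (R : ℕ → ℕ → Prop) (s : Finset ℕ),
    n ≤ s.card → (∃ t ⊆ s, t.card = p ∧ ∀ i ∈ t, ∀ j ∈ t, i < j → R i j) ∨
      (∃ t ⊆ s, t.card = q ∧ ∀ i ∈ t, ∀ j ∈ t, i < j → ¬ R i j) := by
  intro m
  induction m with
  | zero =>
    intro p q h
    have hp : p = 0 := by omega
    exact ⟨0, fun R s _ => Or.inl ⟨∅, by simp, by simp [hp], by simp⟩⟩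
  | succ m ih =>
    intro p q h
    rcases p with _ | p
    · exact ⟨0, fun R s _ => Or.inl ⟨∅, by simp, by simp, by simp⟩⟩
    rcases q with _ | q
    · exact ⟨0, fun R s _ => Or.inr ⟨∅, by simp, by simp, by simp⟩⟩
    obtain ⟨n1, h1⟩ := ih p (q + 1) (by omega)
    obtain ⟨n2, h2⟩ := ih (p + 1) q (by omega)
    refine ⟨n1 + n2 + 1, fun R s hs => ?_⟩
    have hne : s.Nonempty := by rw [← Finset.card_pos]; omega
    let v := s.min' hne
    have hv : v ∈ s := s.min'_mem hne
    have hlt : ∀ j ∈ s.erase v, v < j := fun j hj =>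
      lt_of_le_of_ne (s.min'_le j (Finset.mem_of_mem_erase hj)) (Finset.ne_of_mem_erase hj).symm
    have hc := Finset.card_filter_add_card_filter_not (s := s.erase v) (fun j => R v j)
    rw [Finset.card_erase_of_mem hv] at hc
    have hsub1 : (s.erase v).filter (fun j => R v j) ⊆ s :=
      (Finset.filter_subset _ _).trans (Finset.erase_subset _ _)
    have hsub2 : (s.erase v).filter (fun j => ¬ R v j) ⊆ s :=
      (Finset.filter_subset _ _).trans (Finset.erase_subset _ _)
    by_cases hb : n1 ≤ ((s.erase v).filter (fun j => R v j)).card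
    · rcases h1 R _ hb with ⟨t, hts, htc, ht⟩ | ⟨t, hts, htc, ht⟩
      · left
        have hvt : v ∉ t := fun h => by simpa using hts h
        refine ⟨insert v t, Finset.insert_subset hv (hts.trans hsub1),
          by rw [Finset.card_insert_of_notMem hvt, htc], ?_⟩
        intro i hi j hj hij
        have key : ∀ i ∈ t, v < i ∧ R v i := fun i hi =>
          ⟨hlt i (Finset.mem_filter.1 (hts hi)).1, (Finset.mem_filter.1 (hts hi)).2⟩
        rw [Finset.mem_insert] at hi hj
        rcases hi with rfl | hi <;> rcases hj with rfl | hj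
        · omega
        · exact (key j hj).2
        · have := (key i hi).1; omega
        · exact ht i hi j hj hij
      · exact Or.inr ⟨t, hts.trans hsub1, htc, ht⟩
    · have hb' : n2 ≤ ((s.erase v).filter (fun j => ¬ R v j)).card := by omega
      rcases h2 R _ hb' with ⟨t, hts, htc, ht⟩ | ⟨t, hts, htc, ht⟩
      · exact Or.inl ⟨t, hts.trans hsub2, htc, ht⟩
      · right
        have hvt : v ∉ t := fun h => by simpa using hts h
        refine ⟨insert v t, Finset.insert_subset hv (hts.trans hsub2),
          by rw [Finset.card_insert_of_notMem hvt, htc], ?_⟩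
        intro i hi j hj hij
        have key : ∀ i ∈ t, v < i ∧ ¬ R v i := fun i hi =>
          ⟨hlt i (Finset.mem_filter.1 (hts hi)).1, (Finset.mem_filter.1 (hts hi)).2⟩
        rw [Finset.mem_insert] at hi hj
        rcases hi with rfl | hi <;> rcases hj with rfl | hj
        · omega
        · exact (key j hj).2
        · have := (key i hi).1; omega
        · exact ht i hi j hj hij

/-- increasing sequence of length `m` with values below `n` -/
def Sq (n m : ℕ) (e : ℕ → ℕ) : Prop :=
  (∀ i < m, e i < n) ∧ ∀ i j, i < j → j < m → e i < e j

lemma Sq.ne {n m : ℕ} {e : ℕ → ℕ} (h : Sq n m e) {i j : ℕ} (hi : i < m) (hj : j < m)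
    (hij : i ≠ j) : e i ≠ e j := by
  rcases lt_or_gt_of_ne hij with h1 | h1
  · exact (h.2 i j h1 hj).ne
  · exact (h.2 j i h1 hi).ne'

lemma ramsey_seq (p q : ℕ) : ∃ n : ℕ, ∀ (R : ℕ → ℕ → Prop),
    (∃ e, Sq n p e ∧ ∀ i j, i < j → j < p → R (e i) (e j)) ∨
    (∃ e, Sq n q e ∧ ∀ i j, i < j → j < q → ¬ R (e i) (e j)) := by
  obtain ⟨n, hn⟩ := ramsey_fin _ p q rfl
  have key : ∀ (t : Finset ℕ) (p : ℕ) (Q : ℕ → ℕ → Prop), t ⊆ Finset.range n → t.card = p →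
      (∀ i ∈ t, ∀ j ∈ t, i < j → Q i j) →
      ∃ e, Sq n p e ∧ ∀ i j, i < j → j < p → Q (e i) (e j) := by
    intro t p Q hts htc ht
    let f := t.orderEmbOfFin htc
    let e : ℕ → ℕ := fun i => if h : i < p then f ⟨i, h⟩ else 0
    have he : ∀ i, i < p → e i ∈ t := by
      intro i hi; simp only [e, hi, dif_pos]; exact t.orderEmbOfFin_mem htc _
    have hlt : ∀ i j, i < j → j < p → e i < e j := by
      intro i j hij hj
      simp only [e, hj, hij.trans hj, dif_pos]
      exact f.strictMono (by simpa using hij)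
    refine ⟨e, ⟨fun i hi => by simpa using hts (he i hi), hlt⟩, fun i j hij hj =>
      ht _ (he i (hij.trans hj)) _ (he j hj) (hlt i j hij hj)⟩
  refine ⟨n, fun R => ?_⟩
  rcases hn R (Finset.range n) (by simp) with ⟨t, h1, h2, h3⟩ | ⟨t, h1, h2, h3⟩
  · exact Or.inl (key t p _ h1 h2 h3)
  · exact Or.inr (key t q _ h1 h2 h3)

end ramsey

section good
open Classical

variable {V : Type} {G : SimpleGraph V}

/-- `k` disjoint acyclic sets with pairwise cyclic unions -/
def Good (G : SimpleGraph V) (k : ℕ) : Prop :=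
  ∃ D : ℕ → Finset V, (∀ i < k, ¬ Cy G (D i)) ∧
    ∀ i j, i < j → j < k → Disjoint (D i) (D j) ∧ Cy G (D i ∪ D j)

/-- induces a tree -/
def Tr (G : SimpleGraph V) (P : Finset V) : Prop := P.Nonempty ∧ ¬ Cy G P ∧ ex G P = -2

lemma not_cy_union {X Y : Finset V} (hX : ¬ Cy G X) (hY : ¬ Cy G Y) (hd : Disjoint X Y)
    (h : dd G X Y ≤ 1) : ¬ Cy G (X ∪ Y) := by
  rintro ⟨B, hB, hn, h0⟩
  have hB' : B = (B ∩ X) ∪ (B ∩ Y) := by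
    rw [← Finset.inter_union_distrib_left, Finset.inter_eq_left.2 hB]
  have hd' : Disjoint (B ∩ X) (B ∩ Y) :=
    hd.mono Finset.inter_subset_right Finset.inter_subset_right
  rw [hB', ex_union hd'] at h0
  have h1 := dd_mono (G := G) (Finset.inter_subset_right : B ∩ X ⊆ X)
    (Finset.inter_subset_right : B ∩ Y ⊆ Y)
  rcases (B ∩ X).eq_empty_or_nonempty with e1 | e1
  · rcases (B ∩ Y).eq_empty_or_nonempty with e2 | e2
    · rw [e1, e2] at hB'; simp at hB'; exact hn.ne_empty hB'
    · have := ex_of_not_cy hY Finset.inter_subset_right e2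
      rw [e1] at h0; simp at h0; linarith
  · have t1 := ex_of_not_cy hX Finset.inter_subset_right e1
    rcases (B ∩ Y).eq_empty_or_nonempty with e2 | e2
    · rw [e2] at h0; simp at h0; linarith
    · have := ex_of_not_cy hY Finset.inter_subset_right e2
      linarith

lemma Tr.union {X Y : Finset V} (hX : Tr G X) (hY : Tr G Y) (hd : Disjoint X Y)
    (h : dd G X Y = 1) : Tr G (X ∪ Y) :=
  ⟨hX.1.inl, not_cy_union hX.2.1 hY.2.1 hd h.le, by
    rw [ex_union hd, hX.2.2, hY.2.2, h]; norm_num⟩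

lemma cy_union {X Y : Finset V} (hX : Tr G X) (hY : Tr G Y) (hd : Disjoint X Y)
    (h : 2 ≤ dd G X Y) : Cy G (X ∪ Y) :=
  ⟨_, subset_rfl, hX.1.inl, by rw [ex_union hd, hX.2.2, hY.2.2]; linarith⟩

lemma tr_singleton (v : V) : Tr G {v} := by
  refine ⟨by simp, ?_, ex_singleton v⟩
  rintro ⟨B, hB, hn, h0⟩
  rw [Finset.subset_singleton_iff] at hB
  rcases hB with rfl | rfl
  · simp at hn
  · rw [ex_singleton] at h0; linarith

lemma good_of_trees {k : ℕ} (D : ℕ → Finset V) (h : ∀ i < k, Tr G (D i))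
    (h2 : ∀ i j, i < j → j < k → Disjoint (D i) (D j) ∧ 2 ≤ dd G (D i) (D j)) : Good G k :=
  ⟨D, fun i hi => (h i hi).2.1, fun i j hij hj => ⟨(h2 i j hij hj).1,
    cy_union (h i (hij.trans hj)) (h j hj) (h2 i j hij hj).1 (h2 i j hij hj).2⟩⟩

/-- type one -/
lemma good_of_one {k : ℕ} (X Y : ℕ → Finset V) (hX : ∀ i < k, Tr G (X i))
    (hY : ∀ i < k, Tr G (Y i)) (hXX : ∀ i < k, ∀ j < k, i ≠ j → Disjoint (X i) (X j))
    (hYY : ∀ i < k, ∀ j < k, i ≠ j → Disjoint (Y i) (Y j))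
    (hXY : ∀ i < k, ∀ j < k, Disjoint (X i) (Y j))
    (h1 : ∀ i < k, ∀ j < k, dd G (X i) (Y j) = 1) : Good G k := by
  refine good_of_trees (fun i => X i ∪ Y i) (fun i hi => (hX i hi).union (hY i hi)
    (hXY i hi i hi) (h1 i hi i hi)) ?_
  intro i j hij hj
  have hi := hij.trans hj
  refine ⟨?_, ?_⟩
  · simp only [Finset.disjoint_union_left, Finset.disjoint_union_right]
    exact ⟨⟨hXX i hi j hj hij.ne, (hXY j hj i hi).symm⟩, hXY i hi j hj, hYY i hi j hj hij.ne⟩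
  · simp only [dd_union_left (hXY i hi i hi), dd_union_right (hXY j hj j hj)]
    rw [h1 i hi j hj, dd_comm (Y i) (X j), h1 j hj i hi]
    linarith [dd_nonneg (G := G) (X i) (X j), dd_nonneg (G := G) (Y i) (Y j)]

lemma sparse (k q : ℕ) : ∃ n : ℕ, ∀ (V : Type) (G : SimpleGraph V) (P : ℕ → Finset V),
    (∀ i < n, Tr G (P i)) → (∀ i < n, ∀ j < n, i ≠ j → Disjoint (P i) (P j)) →
    Good G k ∨ ∃ e, Sq n q e ∧ ∀ i j, i < j → j < q → dd G (P (e i)) (P (e j)) = 0 := by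
  obtain ⟨n1, hn1⟩ := ramsey_seq (2 * k) q
  obtain ⟨n, hn⟩ := ramsey_seq k n1
  refine ⟨n, fun V G P hT hD => ?_⟩
  rcases hn (fun i j => 2 ≤ dd G (P i) (P j)) with ⟨e, he, h⟩ | ⟨e, he, h⟩
  · left
    exact good_of_trees (fun i => P (e i)) (fun i hi => hT _ (he.1 i hi)) fun i j hij hj =>
      ⟨hD _ (he.1 i (hij.trans hj)) _ (he.1 j hj) (he.2 i j hij hj).ne, h i j hij hj⟩
  · rcases hn1 (fun i j => dd G (P (e i)) (P (e j)) = 1) with ⟨f, hf, h'⟩ | ⟨f, hf, h'⟩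
    · left
      have hdis : ∀ i < 2 * k, ∀ j < 2 * k, i ≠ j → Disjoint (P (e (f i))) (P (e (f j))) :=
        fun i hi j hj hij => hD _ (he.1 _ (hf.1 i hi)) _ (he.1 _ (hf.1 j hj))
          (he.ne (hf.1 i hi) (hf.1 j hj) (hf.ne hi hj hij))
      have hT' : ∀ i < 2 * k, Tr G (P (e (f i))) := fun i hi => hT _ (he.1 _ (hf.1 i hi))
      refine good_of_one (fun i => P (e (f i))) (fun i => P (e (f (k + i))))
        (fun i hi => hT' i (by omega)) (fun i hi => hT' _ (by omega))
        (fun i hi j hj hij => hdis _ (by omega) _ (by omega) hij)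
        (fun i hi j hj hij => hdis _ (by omega) _ (by omega) (by omega))
        (fun i hi j hj => hdis _ (by omega) _ (by omega) (by omega))
        (fun i hi j hj => h' _ _ (by omega) (by omega))
    · right
      refine ⟨fun i => e (f i), ⟨fun i hi => he.1 _ (hf.1 i hi), fun i j hij hj =>
        he.2 _ _ (hf.2 i j hij hj) (hf.1 j hj)⟩, fun i j hij hj => ?_⟩
      show dd G (P (e (f i))) (P (e (f j))) = 0
      have a1 : ¬ dd G (P (e (f i))) (P (e (f j))) = 1 := h' i j hij hj
      have a2 : ¬ 2 ≤ dd G (P (e (f i))) (P (e (f j))) := h _ _ (hf.2 i j hij hj) (hf.1 j hj)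
      have a3 := dd_nonneg (G := G) (P (e (f i))) (P (e (f j)))
      omega

lemma exists_leaf {R : Finset V} (h : Tr G R) (hc : 2 ≤ R.card) : ∃ x ∈ R, Tr G (R.erase x) := by
  obtain ⟨x, hx, hx1⟩ : ∃ x ∈ R, dd G {x} R ≤ 1 := by
    by_contra hn
    push Not at hn
    have := ex_nonneg_of_deg (G := G) (C := R) fun v hv => hn v hv
    rw [h.2.2] at this; linarith
  have hne : (R.erase x).Nonempty := by
    rw [← Finset.card_pos, Finset.card_erase_of_mem hx]; omega
  have h1 : ¬ Cy G (R.erase x) := fun hh => h.2.1 (hh.mono (Finset.erase_subset _ _))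
  refine ⟨x, hx, hne, h1, le_antisymm (ex_of_not_cy h1 subset_rfl hne) ?_⟩
  rw [ex_erase hx, h.2.2]; linarith

lemma two_step {W P : Finset V} {w0 : ℕ} (hP : Tr G P) (hW : 2 * w0 < W.card)
    (h2 : ∀ w ∈ W, 2 ≤ dd G {w} P) : ∃ W' ⊆ W, w0 ≤ W'.card ∧
    ((∃ y ∈ W, ∃ R ⊆ P, Tr G R ∧ dd G {y} R ≤ 1 ∧ ∀ w ∈ W', 2 ≤ dd G {w} R) ∨
      ∃ x ∈ P, ∀ w ∈ W', G.Adj x w) := by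
  let f : Finset V → Finset V := fun R => W.filter (fun w => 2 ≤ dd G {w} R)
  have hfP : f P = W := Finset.filter_true_of_mem h2
  obtain ⟨R, hRP, hR⟩ := exists_minimal_le_of_wellFoundedLT
      (fun R : Finset V => Tr G R ∧ 2 * w0 < (f R).card) P ⟨hP, by rw [hfP]; exact hW⟩
  have hc : 2 ≤ R.card := by
    have : (f R).Nonempty := by rw [← Finset.card_pos]; have := hR.1.2; omega
    obtain ⟨w, hw⟩ := this
    have := (Finset.mem_filter.1 hw).2
    rw [dd_sing] at this
    have h3 := Finset.card_le_card (Finset.filter_subset (G.Adj w) R)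
    omega
  obtain ⟨x, hx, hT⟩ := exists_leaf hR.1.1 hc
  have hle : (f (R.erase x)).card ≤ 2 * w0 := by
    by_contra hn
    push Not at hn
    exact Finset.notMem_erase x R (hR.2 ⟨hT, hn⟩ (Finset.erase_subset _ _) hx)
  by_cases hb : w0 ≤ (f (R.erase x)).card
  · refine ⟨f (R.erase x), Finset.filter_subset _ _, hb, Or.inl ?_⟩
    obtain ⟨y, hy, hyn⟩ : ∃ y ∈ W, y ∉ f (R.erase x) := by
      by_contra hn
      push Not at hn
      have := Finset.card_le_card (show W ⊆ f (R.erase x) from hn)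
      omega
    refine ⟨y, hy, R.erase x, (Finset.erase_subset _ _).trans hRP, hT, ?_, fun w hw =>
      (Finset.mem_filter.1 hw).2⟩
    by_contra hn
    exact hyn (Finset.mem_filter.2 ⟨hy, by omega⟩)
  · refine ⟨f R \ f (R.erase x), Finset.sdiff_subset.trans (Finset.filter_subset _ _), ?_,
      Or.inr ⟨x, hRP hx, ?_⟩⟩
    · have := Finset.le_card_sdiff (f (R.erase x)) (f R)
      have := hR.1.2
      omega
    · intro w hw
      obtain ⟨hw1, hw2⟩ := Finset.mem_sdiff.1 hw
      obtain ⟨hwW, hw1⟩ := Finset.mem_filter.1 hw1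
      by_contra hn
      refine hw2 (Finset.mem_filter.2 ⟨hwW, ?_⟩)
      have e := dd_union_right (G := G) (C := {w}) (A := {x}) (B := R.erase x) (by simp)
      rw [← Finset.insert_eq, Finset.insert_erase hx, dd_sing_sing,
        if_neg (fun h => hn h.symm)] at e
      linarith

lemma two_iter (w0 L : ℕ) : ∃ M : ℕ, ∀ (V : Type) (G : SimpleGraph V) (W : Finset V)
    (P : ℕ → Finset V), M ≤ W.card → (∀ i < L, Tr G (P i)) →
    (∀ i < L, ∀ w ∈ W, 2 ≤ dd G {w} (P i)) →
    ∃ W' ⊆ W, w0 ≤ W'.card ∧ ∃ (T : Finset ℕ) (y x : ℕ → V) (R : ℕ → Finset V),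
      (∀ i < L, i ∈ T → y i ∈ W ∧ y i ∉ W' ∧ R i ⊆ P i ∧ Tr G (R i) ∧ dd G {y i} (R i) ≤ 1 ∧
        (∀ w ∈ W', 2 ≤ dd G {w} (R i)) ∧
        ∀ j, i < j → j < L → j ∈ T → y i ≠ y j ∧ 2 ≤ dd G {y j} (R i)) ∧
      (∀ i < L, i ∉ T → x i ∈ P i ∧ ∀ w ∈ W', G.Adj (x i) w) := by
  induction L generalizing w0 with
  | zero =>
    refine ⟨w0 + 1, fun V G W P hW _ _ => ⟨W, subset_rfl, by omega, ∅, ?_⟩⟩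
    obtain ⟨z, -⟩ : W.Nonempty := by rw [← Finset.card_pos]; omega
    exact ⟨fun _ => z, fun _ => z, fun _ => ∅, by simp, by simp⟩
  | succ L ih =>
    obtain ⟨M, hM⟩ := ih (2 * w0 + 1)
    refine ⟨M, fun V G W P hW hT h2 => ?_⟩
    obtain ⟨W1, hW1, hc1, T, y, x, R, hA, hB⟩ := hM V G W P hW (fun i hi => hT i (by omega))
      (fun i hi => h2 i (by omega))
    obtain ⟨W2, hW2, hc2, h⟩ := two_step (w0 := w0) (hT L (by omega)) (show 2 * w0 < W1.card by omega)
      (fun w hw => h2 L (by omega) w (hW1 hw))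
    rcases h with ⟨y', hy', R', hR', hTr, hd, hw⟩ | ⟨x', hx', hw⟩
    · refine ⟨W2, hW2.trans hW1, hc2, insert L T, fun i => if i = L then y' else y i, x,
        fun i => if i = L then R' else R i, ?_, ?_⟩
      · intro i hi hiT
        by_cases hiL : i = L
        · simp only [hiL, if_true]
          refine ⟨hW1 hy', fun h => ?_, hR', hTr, hd, hw, fun j h1 h2 => by omega⟩
          have := hw _ h; omega
        · simp only [hiL, if_false]
          obtain ⟨a1, a2, a3, a4, a5, a6, a7⟩ := hA i (by omega)
            ((Finset.mem_insert.1 hiT).resolve_left hiL)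
          refine ⟨a1, fun h => a2 (hW2 h), a3, a4, a5, fun w hw => a6 w (hW2 hw), ?_⟩
          intro j hij hj hjT
          by_cases hjL : j = L
          · simp only [hjL, if_true]
            exact ⟨fun h => a2 (h ▸ hy'), a6 _ hy'⟩
          · simp only [hjL, if_false]
            exact a7 j hij (by omega) ((Finset.mem_insert.1 hjT).resolve_left hjL)
      · intro i hi hiT
        rw [Finset.mem_insert, not_or] at hiT
        obtain ⟨a1, a2⟩ := hB i (by omega) hiT.2
        exact ⟨a1, fun w hw => a2 w (hW2 hw)⟩
    · refine ⟨W2, hW2.trans hW1, hc2, T.erase L, y, fun i => if i = L then x' else x i, R, ?_, ?_⟩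
      · intro i hi hiT
        obtain ⟨hiL, hiT⟩ := Finset.mem_erase.1 hiT
        obtain ⟨a1, a2, a3, a4, a5, a6, a7⟩ := hA i (by omega) hiT
        refine ⟨a1, fun h => a2 (hW2 h), a3, a4, a5, fun w hw => a6 w (hW2 hw), ?_⟩
        intro j hij hj hjT
        obtain ⟨hjL, hjT⟩ := Finset.mem_erase.1 hjT
        exact a7 j hij (by omega) hjT
      · intro i hi hiT
        by_cases hiL : i = L
        · simp only [hiL, if_true]
          exact ⟨hx', hw⟩
        · simp only [hiL, if_false]
          obtain ⟨a1, a2⟩ := hB i (by omega) (fun h => hiT (Finset.mem_erase.2 ⟨hiL, h⟩))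
          exact ⟨a1, fun w hw => a2 w (hW2 hw)⟩

lemma enum {t : Finset ℕ} {k n : ℕ} (hk : k ≤ t.card) (hn : ∀ i ∈ t, i < n) :
    ∃ e, Sq n k e ∧ ∀ i < k, e i ∈ t := by
  obtain ⟨t', ht', htc⟩ := Finset.exists_subset_card_eq hk
  let f := t'.orderEmbOfFin htc
  let e : ℕ → ℕ := fun i => if h : i < k then f ⟨i, h⟩ else 0
  have he : ∀ i, i < k → e i ∈ t' := by
    intro i hi; simp only [e, hi, dif_pos]; exact t'.orderEmbOfFin_mem htc _
  refine ⟨e, ⟨fun i hi => hn _ (ht' (he i hi)), ?_⟩, fun i hi => ht' (he i hi)⟩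
  intro i j hij hj
  simp only [e, hj, hij.trans hj, dif_pos]
  exact f.strictMono (by simpa using hij)

lemma good_of_two (k : ℕ) : ∃ M : ℕ, ∀ (V : Type) (G : SimpleGraph V) (v : ℕ → V)
    (P : ℕ → Finset V), (∀ i < M, Tr G (P i)) →
    (∀ i < M, ∀ j < M, i ≠ j → Disjoint (P i) (P j)) → (∀ i < M, ∀ j < M, i ≠ j → v i ≠ v j) →
    (∀ i < M, ∀ j < M, v i ∉ P j) → (∀ i < M, ∀ j < M, 2 ≤ dd G {v i} (P j)) → Good G k := by
  obtain ⟨M, hM⟩ := two_iter k (2 * k)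
  refine ⟨M + 2 * k, fun V G v P hT hPP hvv hvP h2 => ?_⟩
  let W := (Finset.range M).image v
  have hW : W.card = M := by
    rw [Finset.card_image_of_injOn, Finset.card_range]
    intro i hi j hj hij
    simp at hi hj
    by_contra hne
    exact hvv i (by omega) j (by omega) hne hij
  have hWP : ∀ w ∈ W, ∀ j < 2 * k, w ∉ P j ∧ 2 ≤ dd G {w} (P j) := by
    intro w hw j hj
    obtain ⟨i, hi, rfl⟩ := Finset.mem_image.1 hw
    rw [Finset.mem_range] at hi
    exact ⟨hvP i (by omega) j (by omega), h2 i (by omega) j (by omega)⟩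
  obtain ⟨W', hW'W, hW'c, T, y, x, R, hA, hB⟩ := hM V G W P hW.ge (fun i hi => hT i (by omega))
    (fun i hi w hw => (hWP w hw i hi).2)
  have hc := Finset.card_filter_add_card_filter_not (s := Finset.range (2 * k)) (fun j => j ∈ T)
  rw [Finset.card_range] at hc
  by_cases hb : k ≤ ((Finset.range (2 * k)).filter (fun j => j ∈ T)).card
  · obtain ⟨e, he, heT⟩ := enum (n := 2 * k) hb (fun i hi => by simpa using (Finset.mem_filter.1 hi).1)
    have heT' : ∀ i < k, e i ∈ T := fun i hi => (Finset.mem_filter.1 (heT i hi)).2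
    have hd : ∀ i < k, ∀ j < k, Disjoint {y (e i)} (R (e j)) := by
      intro i hi j hj
      rw [Finset.disjoint_singleton_left]
      obtain ⟨a1, -⟩ := hA _ (he.1 i hi) (heT' i hi)
      obtain ⟨-, -, a3, -⟩ := hA _ (he.1 j hj) (heT' j hj)
      exact fun h => (hWP _ a1 _ (he.1 j hj)).1 (a3 h)
    refine ⟨fun i => {y (e i)} ∪ R (e i), fun i hi => ?_, fun i j hij hj => ?_⟩
    · obtain ⟨a1, a2, a3, a4, a5, a6, a7⟩ := hA _ (he.1 i hi) (heT' i hi)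
      exact not_cy_union (tr_singleton _).2.1 a4.2.1 (hd i hi i hi) a5
    · have hi := hij.trans hj
      obtain ⟨a1, a2, a3, a4, a5, a6, a7⟩ := hA _ (he.1 i hi) (heT' i hi)
      obtain ⟨b1, b2, b3, b4, -⟩ := hA _ (he.1 j hj) (heT' j hj)
      obtain ⟨c1, c2⟩ := a7 _ (he.2 i j hij hj) (he.1 j hj) (heT' j hj)
      refine ⟨?_, ?_⟩
      · simp only [Finset.disjoint_union_left, Finset.disjoint_union_right]
        refine ⟨⟨by simpa using c1, (hd j hj i hi).symm⟩, hd i hi j hj, ?_⟩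
        refine (hPP (e i) ?_ (e j) ?_ (he.2 i j hij hj).ne).mono a3 b3
        · have := he.1 i hi; omega
        · have := he.1 j hj; omega
      · refine (cy_union (tr_singleton (y (e j))) a4 (hd j hj i hi) c2).mono ?_
        exact Finset.union_subset (Finset.subset_union_left.trans Finset.subset_union_right)
          (Finset.subset_union_right.trans Finset.subset_union_left)
  · have hb' : k ≤ ((Finset.range (2 * k)).filter (fun j => ¬ j ∈ T)).card := by omega
    obtain ⟨e, he, heT⟩ := enum (n := 2 * k) hb' (fun i hi => by simpa using (Finset.mem_filter.1 hi).1)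
    have hB' : ∀ i < k, x (e i) ∈ P (e i) ∧ ∀ w ∈ W', G.Adj (x (e i)) w := fun i hi =>
      hB _ (he.1 i hi) (Finset.mem_filter.1 (heT i hi)).2
    let I := (Finset.range M).filter (fun i => v i ∈ W')
    have hI : W' ⊆ I.image v := by
      intro w hw
      obtain ⟨i, hi, rfl⟩ := Finset.mem_image.1 (hW'W hw)
      exact Finset.mem_image_of_mem v (Finset.mem_filter.2 ⟨hi, hw⟩)
    have hIc : k ≤ I.card := hW'c.trans ((Finset.card_le_card hI).trans Finset.card_image_le)
    obtain ⟨f, hf, hfI⟩ := enum (n := M) hIc (fun i hi => by simpa using (Finset.mem_filter.1 hi).1)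
    have hfW : ∀ i < k, v (f i) ∈ W' := fun i hi => (Finset.mem_filter.1 (hfI i hi)).2
    refine good_of_one (fun i => {x (e i)}) (fun i => {v (f i)}) (fun i _ => tr_singleton _)
      (fun i _ => tr_singleton _) ?_ ?_ ?_ ?_
    · intro i hi j hj hij
      have t1 := he.1 i hi
      have t2 := he.1 j hj
      exact (hPP (e i) (by omega) (e j) (by omega) (he.ne hi hj hij)).mono
        (by simpa using (hB' i hi).1) (by simpa using (hB' j hj).1)
    · intro i hi j hj hij
      have t1 := hf.1 i hi
      have t2 := hf.1 j hj
      simpa using hvv (f i) (by omega) (f j) (by omega) (hf.ne hi hj hij)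
    · intro i hi j hj
      simpa using ((hB' i hi).2 _ (hfW j hj)).ne
    · intro i hi j hj
      rw [dd_sing_sing, if_pos ((hB' i hi).2 _ (hfW j hj))]

end good

section fam
open Classical

variable {V : Type} {G : SimpleGraph V}

/-- family of disjoint broken cycles -/
structure Fam (G : SimpleGraph V) (P : ℕ → Finset V) (v : ℕ → V) (n : ℕ) : Prop where
  tr : ∀ i < n, Tr G (P i)
  two : ∀ i < n, dd G {v i} (P i) = 2
  pp : ∀ i < n, ∀ j < n, i ≠ j → Disjoint (P i) (P j)
  vv : ∀ i < n, ∀ j < n, i ≠ j → v i ≠ v j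
  vp : ∀ i < n, ∀ j < n, v i ∉ P j

lemma Fam.comp {P : ℕ → Finset V} {v : ℕ → V} {n m : ℕ} {e : ℕ → ℕ} (h : Fam G P v n)
    (he : Sq n m e) : Fam G (fun i => P (e i)) (fun i => v (e i)) m where
  tr i hi := h.tr _ (he.1 i hi)
  two i hi := h.two _ (he.1 i hi)
  pp i hi j hj hij := h.pp _ (he.1 i hi) _ (he.1 j hj) (he.ne hi hj hij)
  vv i hi j hj hij := h.vv _ (he.1 i hi) _ (he.1 j hj) (he.ne hi hj hij)
  vp i hi j hj := h.vp _ (he.1 i hi) _ (he.1 j hj)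

lemma Fam.one {P : ℕ → Finset V} {v : ℕ → V} {n k : ℕ} {a b : ℕ → ℕ} (h : Fam G P v n)
    (ha : Sq n k a) (hb : Sq n k b) (h1 : ∀ i < k, ∀ j < k, dd G {v (a i)} (P (b j)) = 1) :
    Good G k := by
  refine good_of_one (fun i => {v (a i)}) (fun j => P (b j)) (fun i _ => tr_singleton _)
    (fun i hi => h.tr _ (hb.1 i hi)) ?_ (h.comp hb).pp ?_ h1
  · intro i hi j hj hij
    simpa using (h.comp ha).vv i hi j hj hij
  · intro i hi j hj
    simpa using h.vp _ (ha.1 i hi) _ (hb.1 j hj)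

lemma Sq.comp {n m l : ℕ} {e f : ℕ → ℕ} (he : Sq n m e) (hf : Sq m l f) :
    Sq n l (fun i => e (f i)) :=
  ⟨fun i hi => he.1 _ (hf.1 i hi), fun i j hij hj => he.2 _ _ (hf.2 i j hij hj) (hf.1 j hj)⟩

lemma sq_left (k : ℕ) : Sq (2 * k) k (fun i => i) := ⟨fun i hi => by dsimp only; omega, fun i j h _ => h⟩
lemma sq_right (k : ℕ) : Sq (2 * k) k (fun i => k + i) :=
  ⟨fun i hi => by dsimp only; omega, fun i j h _ => by dsimp only; omega⟩

lemma handle (k q : ℕ) : ∃ n : ℕ, ∀ (V : Type) (G : SimpleGraph V) (P : ℕ → Finset V) (v : ℕ → V),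
    Fam G P v n → Good G k ∨ ∃ e, Sq n q e ∧ ∀ i j, i < j → j < q →
      dd G {v (e i)} (P (e j)) = 0 ∧ dd G {v (e j)} (P (e i)) = 0 := by
  obtain ⟨M, hM⟩ := good_of_two k
  have key : ∀ q, ∃ n, ∀ (x : ℕ → ℕ → ℤ), (∀ i j, 0 ≤ x i j) →
      (∃ e, Sq n (2 * M) e ∧ ∀ i j, i < j → j < 2 * M → 2 ≤ x (e i) (e j)) ∨
      (∃ e, Sq n (2 * k) e ∧ ∀ i j, i < j → j < 2 * k → x (e i) (e j) = 1) ∨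
      (∃ e, Sq n q e ∧ ∀ i j, i < j → j < q → x (e i) (e j) = 0) := by
    intro q
    obtain ⟨n1, hn1⟩ := ramsey_seq (2 * k) q
    obtain ⟨n, hn⟩ := ramsey_seq (2 * M) n1
    refine ⟨n, fun x hx => ?_⟩
    rcases hn (fun i j => 2 ≤ x i j) with h | ⟨e, he, h⟩
    · exact Or.inl h
    right
    rcases hn1 (fun i j => x (e i) (e j) = 1) with ⟨f, hf, h'⟩ | ⟨f, hf, h'⟩
    · exact Or.inl ⟨_, he.comp hf, h'⟩
    · refine Or.inr ⟨_, he.comp hf, fun i j hij hj => ?_⟩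
      show x (e (f i)) (e (f j)) = 0
      have a1 : ¬ x (e (f i)) (e (f j)) = 1 := h' i j hij hj
      have a2 : ¬ 2 ≤ x (e (f i)) (e (f j)) := h _ _ (hf.2 i j hij hj) (hf.1 j hj)
      have a3 := hx (e (f i)) (e (f j))
      omega
  obtain ⟨n1, hn1⟩ := key q
  obtain ⟨n, hn⟩ := key n1
  have two : ∀ (V : Type) (G : SimpleGraph V) (P : ℕ → Finset V) (v : ℕ → V) (n : ℕ),
      Fam G P v n → ∀ a b, Sq n M a → Sq n M b →
      (∀ i < M, ∀ j < M, 2 ≤ dd G {v (a i)} (P (b j))) → Good G k := by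
    intro V G P v n hF a b ha hb h2
    exact hM V G (fun i => v (a i)) (fun j => P (b j)) (hF.comp hb).tr (hF.comp hb).pp
      (hF.comp ha).vv (fun i hi j hj => hF.vp _ (ha.1 i hi) _ (hb.1 j hj)) h2
  refine ⟨n, fun V G P v hF => ?_⟩
  rcases hn (fun i j => dd G {v i} (P j)) (fun i j => dd_nonneg _ _) with
    ⟨e, he, h⟩ | ⟨e, he, h⟩ | ⟨e, he, h⟩
  · left
    exact two V G P v n hF _ _ (he.comp (sq_left M)) (he.comp (sq_right M)) fun i hi j hj =>
      h _ _ (by omega) (by omega)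
  · left
    exact hF.one (he.comp (sq_left k)) (he.comp (sq_right k)) fun i hi j hj =>
      h _ _ (by omega) (by omega)
  rcases hn1 (fun i j => dd G {v (e j)} (P (e i))) (fun i j => dd_nonneg _ _) with
    ⟨f, hf, h'⟩ | ⟨f, hf, h'⟩ | ⟨f, hf, h'⟩
  · left
    exact two V G P v n hF _ _ ((he.comp hf).comp (sq_right M)) ((he.comp hf).comp (sq_left M))
      fun i hi j hj => h' _ _ (by omega) (by omega)
  · left
    exact hF.one ((he.comp hf).comp (sq_right k)) ((he.comp hf).comp (sq_left k))
      fun i hi j hj => h' _ _ (by omega) (by omega)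
  · right
    exact ⟨_, he.comp hf, fun i j hij hj => ⟨h _ _ (hf.2 i j hij hj) (hf.1 j hj), h' i j hij hj⟩⟩

lemma not_cy_biUnion (s : Finset ℕ) (F : ℕ → Finset V) (h1 : ∀ t ∈ s, ¬ Cy G (F t))
    (h2 : ∀ t ∈ s, ∀ u ∈ s, t ≠ u → Disjoint (F t) (F u))
    (h3 : ∀ t ∈ s, ∀ u ∈ s, t ≠ u → dd G (F t) (F u) = 0) : ¬ Cy G (s.biUnion F) := by
  induction s using Finset.induction_on with
  | empty =>
    rintro ⟨B, hB, ⟨x, hx⟩, -⟩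
    simpa using hB hx
  | insert a s ha ih =>
    rw [Finset.biUnion_insert]
    have hne : ∀ t ∈ s, a ≠ t := fun t ht h => ha (h ▸ ht)
    have hdis : Disjoint (F a) (s.biUnion F) := by
      rw [Finset.disjoint_biUnion_right]
      exact fun t ht => h2 _ (by simp) _ (by simp [ht]) (hne t ht)
    refine not_cy_union (h1 _ (by simp)) (ih (fun t ht => h1 t (by simp [ht]))
      (fun t ht u hu => h2 t (by simp [ht]) u (by simp [hu]))
      (fun t ht u hu => h3 t (by simp [ht]) u (by simp [hu]))) hdis ?_
    have : dd G (F a) (s.biUnion F) = ∑ t ∈ s, dd G (F a) (F t) := by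
      rw [dd_comm]
      unfold dd
      rw [Finset.sum_biUnion (fun t ht u hu => h2 t (by simpa using Or.inr ht) u
        (by simpa using Or.inr hu))]
      exact Finset.sum_congr rfl fun t _ => dd_comm (F t) (F a)
    rw [this, Finset.sum_eq_zero fun t ht => h3 _ (by simp) _ (by simp [ht]) (hne t ht)]
    norm_num

lemma pair_inj {k a b c d : ℕ} (hb : b < k) (hd : d < k) (h : a * k + b = c * k + d) :
    a = c ∧ b = d := by
  have hk : 0 < k := by omega
  have h1 := congrArg (· / k) h
  have h2 := congrArg (· % k) h
  simp only [Nat.mul_add_mod', Nat.mod_eq_of_lt hb, Nat.mod_eq_of_lt hd] at h2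
  refine ⟨?_, h2⟩
  subst h2
  exact Nat.eq_of_mul_eq_mul_right hk (by omega)

lemma good_of_zero {k : ℕ} {P : ℕ → Finset V} {v : ℕ → V} (hF : Fam G P v (k * k))
    (hPP : ∀ i < k * k, ∀ j < k * k, i ≠ j → dd G (P i) (P j) = 0)
    (hvv : ∀ i < k * k, ∀ j < k * k, i ≠ j → dd G {v i} {v j} = 0)
    (hvP : ∀ i < k * k, ∀ j < k * k, i ≠ j → dd G {v i} (P j) = 0) : Good G k := by
  have hb : ∀ i < k, ∀ j < k, i * k + j < k * k := by
    intro i hi j hj; nlinarith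
  let T : ℕ → ℕ → Finset V := fun i t => if i < t then P (i * k + t) else
    if t < i then {v (t * k + i)} else ∅
  have Tdis : ∀ i < k, ∀ t < k, ∀ j < k, ∀ u < k, (i ≠ j ∨ t ≠ u) → Disjoint (T i t) (T j u) := by
    intro i hi t ht j hj u hu hne
    simp only [T]
    split_ifs with h1 h2 h3 h4 h5 h6 h7 h8
    · exact hF.pp _ (hb i hi t ht) _ (hb j hj u hu) fun h => by
        have := pair_inj ht hu h; omega
    · simpa using hF.vp _ (hb u hu j hj) _ (hb i hi t ht)
    · simp
    · simpa using hF.vp _ (hb t ht i hi) _ (hb j hj u hu)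
    · simpa using hF.vv _ (hb t ht i hi) _ (hb u hu j hj) fun h => by
        have := pair_inj hi hj h; omega
    · simp
    all_goals simp
  have Tdd : ∀ i < k, ∀ t < k, ∀ u < k, t ≠ u → dd G (T i t) (T i u) = 0 := by
    intro i hi t ht u hu hne
    simp only [T]
    split_ifs with h1 h2 h3 h4 h5 h6 h7 h8
    · exact hPP _ (hb i hi t ht) _ (hb i hi u hu) fun h => by
        have := pair_inj ht hu h; omega
    · rw [dd_comm]
      exact hvP _ (hb u hu i hi) _ (hb i hi t ht) fun h => by
        have := pair_inj hi ht h; omega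
    · simp
    · exact hvP _ (hb t ht i hi) _ (hb i hi u hu) fun h => by
        have := pair_inj hi hu h; omega
    · exact hvv _ (hb t ht i hi) _ (hb u hu i hi) fun h => by
        have := pair_inj hi hi h; omega
    · simp
    all_goals simp
  refine ⟨fun i => (Finset.range k).biUnion (T i), fun i hi => ?_, fun i j hij hj => ⟨?_, ?_⟩⟩
  · refine not_cy_biUnion _ _ ?_ ?_ ?_
    · intro t ht
      rw [Finset.mem_range] at ht
      simp only [T]
      split_ifs
      · exact (hF.tr _ (hb i hi t ht)).2.1
      · exact (tr_singleton _).2.1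
      · rintro ⟨B, hB, ⟨x, hx⟩, -⟩
        simpa using hB hx
    · intro t ht u hu htu
      rw [Finset.mem_range] at ht hu
      exact Tdis i hi t ht i hi u hu (Or.inr htu)
    · intro t ht u hu htu
      rw [Finset.mem_range] at ht hu
      exact Tdd i hi t ht u hu htu
  · rw [Finset.disjoint_biUnion_left]
    intro t ht
    rw [Finset.disjoint_biUnion_right]
    intro u hu
    rw [Finset.mem_range] at ht hu
    exact Tdis i (hij.trans hj) t ht j hj u hu (Or.inl hij.ne)
  · have hi := hij.trans hj
    have hx := hb i hi j hj
    refine (cy_union (tr_singleton (v (i * k + j))) (hF.tr _ hx) (by simpa using hF.vp _ hx _ hx)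
      (hF.two _ hx).ge).mono ?_
    have e1 : T i j = P (i * k + j) := by simp only [T, if_pos hij]
    have e2 : T j i = {v (i * k + j)} := by simp only [T, if_neg hij.not_gt, if_pos hij]
    rw [← e1, ← e2]
    exact Finset.union_subset
      ((Finset.subset_biUnion_of_mem (T j) (Finset.mem_range.2 hi)).trans Finset.subset_union_right)
      ((Finset.subset_biUnion_of_mem (T i) (Finset.mem_range.2 hj)).trans Finset.subset_union_left)

lemma good_of_fam (k : ℕ) : ∃ n : ℕ, ∀ (V : Type) (G : SimpleGraph V) (P : ℕ → Finset V)
    (v : ℕ → V), Fam G P v n → Good G k := by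
  obtain ⟨n1, h1⟩ := handle k (k * k)
  obtain ⟨n2, h2⟩ := sparse k n1
  obtain ⟨n3, h3⟩ := sparse k n2
  refine ⟨n3, fun V G P v hF => ?_⟩
  rcases h3 V G P hF.tr hF.pp with h | ⟨e, he, hPP⟩
  · exact h
  have hF1 := hF.comp he
  rcases h2 V G (fun i => {v (e i)}) (fun i _ => tr_singleton _)
    (fun i hi j hj hij => by simpa using hF1.vv i hi j hj hij) with h | ⟨f, hf, hvv⟩
  · exact h
  have hF2 := hF1.comp hf
  rcases h1 V G _ _ hF2 with h | ⟨g, hg, hvP⟩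
  · exact h
  have hF3 := hF2.comp hg
  refine good_of_zero hF3 ?_ ?_ ?_
  · intro i hi j hj hij
    rcases lt_or_gt_of_ne hij with hlt | hlt
    · exact hPP _ _ (hf.2 _ _ (hg.2 i j hlt hj) (hg.1 j hj)) (hf.1 _ (hg.1 j hj))
    · rw [dd_comm]
      exact hPP _ _ (hf.2 _ _ (hg.2 j i hlt hi) (hg.1 i hi)) (hf.1 _ (hg.1 i hi))
  · intro i hi j hj hij
    rcases lt_or_gt_of_ne hij with hlt | hlt
    · exact hvv _ _ (hg.2 i j hlt hj) (hg.1 j hj)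
    · rw [dd_comm]
      exact hvv _ _ (hg.2 j i hlt hi) (hg.1 i hi)
  · intro i hi j hj hij
    rcases lt_or_gt_of_ne hij with hlt | hlt
    · exact (hvP i j hlt hj).1
    · exact (hvP j i hlt hi).2

lemma good_of_pack (k : ℕ) : ∃ n : ℕ, ∀ (V : Type) (G : SimpleGraph V) (S : Finset V),
    Pack G n S → Good G k := by
  obtain ⟨n, hn⟩ := good_of_fam k
  refine ⟨n + 1, fun V G S ⟨C, hC, hD⟩ => ?_⟩
  have hne : Nonempty V := by
    obtain ⟨B, -, ⟨x, -⟩, -⟩ := (hC 0 (by omega)).2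
    exact ⟨x⟩
  have : ∀ i, i < n → ∃ (P : Finset V) (v : V), Tr G P ∧ dd G {v} P = 2 ∧ v ∉ P ∧ v ∈ C i ∧ P ⊆ C i := by
    intro i hi
    obtain ⟨K, hK, ⟨v, hv⟩, h0, h2, hm⟩ := exists_min_cyc (hC i (by omega)).2
    have he : ex G (K.erase v) = -2 := by rw [ex_erase hv, h0, h2 v hv]; norm_num
    refine ⟨K.erase v, v, ⟨?_, hm _ (Finset.erase_ssubset hv), he⟩, ?_, Finset.notMem_erase _ _,
      hK hv, (Finset.erase_subset _ _).trans hK⟩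
    · rw [Finset.nonempty_iff_ne_empty]
      intro h; rw [h, ex_empty] at he; norm_num at he
    · rw [dd_sing_erase, h2 v hv]
  choose! P v h1 h2 h3 h4 h5 using this
  refine hn V G P v ⟨h1, h2, ?_, ?_, ?_⟩
  · intro i hi j hj hij
    exact (hD i (by omega) j (by omega) hij).mono (h5 i hi) (h5 j hj)
  · intro i hi j hj hij h
    exact Finset.disjoint_left.1 (hD i (by omega) j (by omega) hij) (h4 i hi) (h ▸ h4 j hj)
  · intro i hi j hj h
    by_cases hij : i = j
    · subst hij; exact h3 i hi h
    · exact Finset.disjoint_left.1 (hD i (by omega) j (by omega) hij) (h4 i hi) (h5 j hj h)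

end fam

section extend
open Classical

variable {V : Type} [Fintype V] {G : SimpleGraph V}

lemma le_ava {k : ℕ} (hk : 2 ≤ k) (h : Good G k) : k ≤ avertexArboricity G := by
  obtain ⟨D, hD1, hD2⟩ := h
  have hD3 : ∀ i < k, ∀ j < k, i ≠ j → Disjoint (D i) (D j) ∧ Cy G (D i ∪ D j) := by
    intro i hi j hj hij
    rcases lt_or_gt_of_ne hij with h | h
    · exact hD2 i j h hj
    · have := hD2 j i h hi
      exact ⟨this.1.symm, Finset.union_comm (D j) (D i) ▸ this.2⟩
  have hne : ∀ i < k, (D i).Nonempty := by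
    intro i hi
    rw [Finset.nonempty_iff_ne_empty]
    intro h
    obtain ⟨j, hj, hij⟩ : ∃ j < k, i ≠ j := by
      by_cases h0 : i = 0
      · exact ⟨1, by omega, by omega⟩
      · exact ⟨0, by omega, h0⟩
    have := (hD3 i hi j hj hij).2
    rw [h, Finset.empty_union] at this
    exact hD1 j hj this
  let cls : (V → ℕ ⊕ V) → ℕ ⊕ V → Finset V := fun c l => Finset.univ.filter (fun x => c x = l)
  let valid : (V → ℕ ⊕ V) → Prop := fun c => (∀ l, ¬ Cy G (cls c l)) ∧
    ∀ i < k, ∀ x ∈ D i, ∀ y ∈ D i, c x = c y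
  have hex : ∃ c, valid c := by
    let c0 : V → ℕ ⊕ V := fun x => if h : ∃ i, i < k ∧ x ∈ D i then Sum.inl (Nat.find h)
      else Sum.inr x
    have hc0 : ∀ i < k, ∀ x ∈ D i, c0 x = Sum.inl i := by
      intro i hi x hx
      have h : ∃ i, i < k ∧ x ∈ D i := ⟨i, hi, hx⟩
      simp only [c0, dif_pos h]
      congr 1
      by_contra hn
      obtain ⟨h1, h2⟩ := Nat.find_spec h
      exact Finset.disjoint_left.1 (hD3 _ h1 _ hi hn).1 h2 hx
    refine ⟨c0, ?_, fun i hi x hx y hy => by rw [hc0 i hi x hx, hc0 i hi y hy]⟩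
    rintro (i | v) hcy
    · by_cases hi : i < k
      · refine hD1 i hi (hcy.mono fun x hx => ?_)
        have hx := (Finset.mem_filter.1 hx).2
        by_cases h : ∃ i, i < k ∧ x ∈ D i
        · simp only [c0, dif_pos h] at hx
          have := Nat.find_spec h
          rw [Sum.inl.inj hx] at this
          exact this.2
        · simp only [c0, dif_neg h] at hx
          cases hx
      · obtain ⟨B, hB, ⟨x, hx⟩, -⟩ := hcy
        have hx := (Finset.mem_filter.1 (hB hx)).2
        by_cases h : ∃ i, i < k ∧ x ∈ D i
        · simp only [c0, dif_pos h] at hx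
          have := Nat.find_spec h
          rw [Sum.inl.inj hx] at this
          exact hi this.1
        · simp only [c0, dif_neg h] at hx
          cases hx
    · refine (tr_singleton (G := G) v).2.1 (hcy.mono fun x hx => ?_)
      have hx := (Finset.mem_filter.1 hx).2
      by_cases h : ∃ i, i < k ∧ x ∈ D i
      · simp only [c0, dif_pos h] at hx
        cases hx
      · simp only [c0, dif_neg h] at hx
        simpa using Sum.inr.inj hx
  obtain ⟨c, hc, hmin⟩ := exists_min_nat valid (fun c => (Finset.univ.image c).card) hex
  have hcomp : ∀ l ∈ Finset.univ.image c, ∀ l' ∈ Finset.univ.image c, l ≠ l' →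
      Cy G (cls c l ∪ cls c l') := by
    intro l hl l' hl' hll
    by_contra hn
    let c1 : V → ℕ ⊕ V := fun x => if c x = l' then l else c x
    have hv : valid c1 := by
      refine ⟨fun a => ?_, fun i hi x hx y hy => by simp only [c1, hc.2 i hi x hx y hy]⟩
      by_cases ha : a = l
      · refine fun hcy => hn (hcy.mono fun x hx => ?_)
        have hx := (Finset.mem_filter.1 hx).2
        simp only [c1] at hx
        simp only [cls, Finset.mem_union, Finset.mem_filter, Finset.mem_univ, true_and]
        split_ifs at hx with h
        · exact Or.inr h
        · exact Or.inl (hx.trans ha)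
      · refine fun hcy => hc.1 a (hcy.mono fun x hx => ?_)
        have hx := (Finset.mem_filter.1 hx).2
        simp only [c1] at hx
        simp only [cls, Finset.mem_filter, Finset.mem_univ, true_and]
        split_ifs at hx with h
        · exact absurd hx.symm ha
        · exact hx
    have him : Finset.univ.image c1 ⊆ (Finset.univ.image c).erase l' := by
      intro a ha
      obtain ⟨x, -, rfl⟩ := Finset.mem_image.1 ha
      simp only [c1]
      split_ifs with h
      · exact Finset.mem_erase.2 ⟨hll, hl⟩
      · exact Finset.mem_erase.2 ⟨h, Finset.mem_image_of_mem c (Finset.mem_univ x)⟩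
    have h1 := hmin c1 hv
    have h2 := Finset.card_le_card him
    rw [Finset.card_erase_of_mem hl'] at h2
    have := Finset.card_pos.2 ⟨l', hl'⟩
    omega
  have hkn : k ≤ (Finset.univ.image c).card := by
    have : ∀ i, i < k → ∃ x, x ∈ D i := fun i hi => hne i hi
    have hV : Nonempty V := ⟨(hne 0 (by omega)).choose⟩
    choose! r hr using this
    have : (Finset.range k).card ≤ (Finset.univ.image c).card := by
      refine Finset.card_le_card_of_injOn (fun i => c (r i))
        (fun i _ => Finset.mem_coe.2 (Finset.mem_image_of_mem c (Finset.mem_univ _))) ?_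
      intro i hi j hj hij
      simp only [Finset.coe_range, Set.mem_Iio] at hi hj
      by_contra hne
      refine hc.1 (c (r i)) ((hD3 i hi j hj hne).2.mono ?_)
      intro x hx
      refine Finset.mem_filter.2 ⟨Finset.mem_univ _, ?_⟩
      rcases Finset.mem_union.1 hx with hx | hx
      · exact hc.2 i hi x hx _ (hr i hi)
      · exact (hc.2 j hj x hx _ (hr j hj)).trans hij.symm
    simpa using this
  refine hkn.trans ?_
  unfold avertexArboricity
  refine le_csSup ⟨Fintype.card V, ?_⟩ ?_
  · rintro n ⟨c, hc, -⟩
    simpa using Fintype.card_le_of_surjective c hc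
  · let e := (Finset.univ.image c).equivFin
    have hmem : ∀ x, c x ∈ Finset.univ.image c := fun x =>
      Finset.mem_image_of_mem c (Finset.mem_univ x)
    let c2 : V → Fin (Finset.univ.image c).card := fun x => e ⟨c x, hmem x⟩
    have hcl : ∀ i, (c2 ⁻¹' {i}).toFinset = cls c (e.symm i).1 := by
      intro i
      ext x
      simp only [Set.mem_toFinset, Set.mem_preimage, Set.mem_singleton_iff, cls, Finset.mem_filter,
        Finset.mem_univ, true_and, c2]
      rw [← Equiv.eq_symm_apply, Subtype.ext_iff]
    refine ⟨c2, ?_, ?_, ?_⟩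
    · intro i
      obtain ⟨x, -, hx⟩ := Finset.mem_image.1 (e.symm i).2
      refine ⟨x, ?_⟩
      simp only [c2]
      rw [← Equiv.eq_symm_apply]
      exact Subtype.ext hx
    · intro i
      rw [acyclic_iff, hcl]
      exact hc.1 _
    · intro i j hij
      rw [acyclic_iff, not_not]
      have := hcomp _ (e.symm i).2 _ (e.symm j).2 (fun h => hij (e.symm.injective (Subtype.ext h)))
      rw [← hcl, ← hcl] at this
      convert this using 1
      ext x; simp

end extend

theorem main_aux : ∃ f : ℕ → ℕ, ∀ (V : Type) [Fintype V] (G : SimpleGraph V),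
      graphFVSNumber G ≤ f (avertexArboricity G) := by
  classical
  choose n hn using good_of_pack
  choose b hb using erdos_posa
  refine ⟨fun a => b (n (a + 2)), fun V _ G => ?_⟩
  rcases hb (n (avertexArboricity G + 2)) V G with h | ⟨X, hX, hcy⟩
  · have := le_ava (by omega) (hn _ V G _ h)
    omega
  · refine le_trans (Nat.sInf_le ⟨X, rfl, ?_⟩) hX
    rw [acyclic_iff]
    convert hcy using 2
    ext x; simp

end AVA

/-- there is a function `f : ℕ → ℕ` such that `τ(G) ≤ f(ava(G))` for every
finite simple graph `G`. -/
theorem fvs_bounded_by_ava :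
    ∃ f : ℕ → ℕ, ∀ (V : Type) [Fintype V] (G : SimpleGraph V),
      graphFVSNumber G ≤ f (avertexArboricity G) := by
  exact AVA.main_aux
end

section
/- There exists a function h₂ : ℕ → ℕ such that for every finite simple graph G, ava(G) ≤ h₂(M), where M is the maximum of adi(D) over all orientations D of G (digraphs obtained from G by assigning to each edge exactly one of its two possible directions). -/
open Function

theorem HasDicycle.mono' {V : Type*} {D : V → V → Prop} {S T : Set V} (h : S ⊆ T)
    (hS : HasDicycle D S) : HasDicycle D T := by
  obtain ⟨v, hv⟩ := hS
  have hle : (fun a b => a ∈ S ∧ b ∈ S ∧ D a b) ≤ (fun a b => a ∈ T ∧ b ∈ T ∧ D a b) :=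
    fun a b hab => ⟨h hab.1, h hab.2.1, hab.2.2⟩
  exact ⟨v, Relation.TransGen.mono hle v v hv⟩

theorem adi_lower {V : Type} [Fintype V] (D : V → V → Prop) (hD : ∀ v, ¬ D v v) {m : ℕ}
    (hm : 2 ≤ m) (A : Fin m → Set V) (hdis : ∀ i j v, v ∈ A i → v ∈ A j → i = j)
    (hac : ∀ i, ¬ HasDicycle D (A i))
    (hcy : ∀ i j, i ≠ j → HasDicycle D (A i ∪ A j)) :
    m ≤ adichromaticNumber D := by
  classical
  let P : (V → Fin m ⊕ V) → Prop := fun c =>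
    (∀ a, ¬ HasDicycle D (c ⁻¹' {a})) ∧ ∀ i, ∀ u ∈ A i, ∀ v ∈ A i, c u = c v
  have hne : ∃ n, ∃ c, P c ∧ (Finset.univ.image c).card = n := by
    let c : V → Fin m ⊕ V := fun v => if h : ∃ i, v ∈ A i then Sum.inl h.choose else Sum.inr v
    have hc : ∀ i, ∀ v ∈ A i, c v = Sum.inl i := by
      intro i v hv
      have h : ∃ i, v ∈ A i := ⟨i, hv⟩
      simp only [c, dif_pos h]
      rw [hdis _ _ v h.choose_spec hv]
    refine ⟨_, c, ⟨?_, ?_⟩, rfl⟩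
    · rintro (i | w) h
      · refine hac i (h.mono' ?_)
        intro v hv
        simp only [Set.mem_preimage, Set.mem_singleton_iff] at hv
        by_cases h' : ∃ i, v ∈ A i
        · obtain ⟨j, hj⟩ := h'
          rw [hc j v hj] at hv
          cases hv
          exact hj
        · simp [c, dif_neg h'] at hv
      · have hs : c ⁻¹' {Sum.inr w} ⊆ {w} := by
          intro v hv
          simp only [Set.mem_preimage, Set.mem_singleton_iff] at hv
          by_cases h' : ∃ i, v ∈ A i
          · simp [c, dif_pos h'] at hv
          · simpa [c, dif_neg h'] using hv
        obtain ⟨v, hv⟩ := h.mono' hs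
        have : ∀ {a b : V}, Relation.TransGen
            (fun a b => a ∈ ({w} : Set V) ∧ b ∈ ({w} : Set V) ∧ D a b) a b → False := by
          intro a b hab
          induction hab with
          | single h => obtain ⟨rfl, rfl, h⟩ := h; exact hD _ h
          | tail _ _ ih => exact ih
        exact this hv
    · intro i u hu v hv
      rw [hc i u hu, hc i v hv]
  obtain ⟨c, ⟨hc1, hc2⟩, hcn⟩ := Nat.find_spec hne
  have hmin : ∀ c', P c' → (Finset.univ.image c).card ≤ (Finset.univ.image c').card := by
    intro c' hc'
    rw [hcn]
    exact Nat.find_min' hne ⟨c', hc', rfl⟩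
  have hcomp : ∀ a ∈ Finset.univ.image c, ∀ b ∈ Finset.univ.image c, a ≠ b →
      HasDicycle D (c ⁻¹' {a} ∪ c ⁻¹' {b}) := by
    intro a ha b hb hab
    by_contra hno
    let c' : V → Fin m ⊕ V := fun v => if c v = b then a else c v
    have hP : P c' := by
      refine ⟨?_, ?_⟩
      · intro e he
        by_cases hea : e = a
        · refine hno (he.mono' ?_)
          intro v hv
          simp only [Set.mem_preimage, Set.mem_singleton_iff, c'] at hv
          simp only [Set.mem_union, Set.mem_preimage, Set.mem_singleton_iff]
          split_ifs at hv with h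
          · exact Or.inr h
          · exact Or.inl (hv.trans hea)
        · refine hc1 e (he.mono' ?_)
          intro v hv
          simp only [Set.mem_preimage, Set.mem_singleton_iff, c'] at hv ⊢
          split_ifs at hv with h
          · exact absurd hv.symm hea
          · exact hv
      · intro i u hu v hv
        simp only [c']
        rw [hc2 i u hu v hv]
    have hsub : Finset.univ.image c' ⊆ (Finset.univ.image c).erase b := by
      intro e he
      simp only [Finset.mem_image, Finset.mem_univ, true_and, c'] at he
      obtain ⟨v, hv⟩ := he
      rw [Finset.mem_erase]
      split_ifs at hv with h
      · subst hv; exact ⟨hab, ha⟩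
      · subst hv; exact ⟨h, Finset.mem_image_of_mem _ (Finset.mem_univ _)⟩
    have h1 := hmin c' hP
    have h2 := Finset.card_le_card hsub
    have h3 := Finset.card_erase_lt_of_mem hb
    omega
  have hbdd : BddAbove {k | ∃ c : V → Fin k, IsCompleteAcyclicColoring D c} := by
    refine ⟨Fintype.card V, ?_⟩
    rintro k ⟨c, hc, -⟩
    simpa using Fintype.card_le_of_surjective c hc
  set I := Finset.univ.image c with hI
  let e := I.equivFin
  have hmem : ∀ v, c v ∈ I := fun v => Finset.mem_image_of_mem _ (Finset.mem_univ _)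
  have hin : I.card ∈ {k | ∃ c : V → Fin k, IsCompleteAcyclicColoring D c} := by
    let d : V → Fin I.card := fun v => e ⟨c v, hmem v⟩
    have hd : ∀ i, d ⁻¹' {i} = c ⁻¹' {(e.symm i).1} := by
      intro i
      ext v
      simp only [Set.mem_preimage, Set.mem_singleton_iff, d]
      rw [← Equiv.eq_symm_apply]
      exact Subtype.ext_iff
    refine ⟨d, ?_, ?_, ?_⟩
    · intro i
      have := (e.symm i).2
      obtain ⟨v, -, hv⟩ := Finset.mem_image.1 this
      refine ⟨v, ?_⟩
      have : v ∈ d ⁻¹' {i} := by rw [hd]; exact hv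
      exact this
    · intro i
      rw [hd]
      exact hc1 _
    · intro i j hij
      rw [hd, hd]
      apply hcomp _ (e.symm i).2 _ (e.symm j).2
      intro h
      exact hij (e.symm.injective (Subtype.ext h))
  refine le_trans ?_ (le_csSup hbdd hin)
  have hnonempty : ∀ i, ∃ v, v ∈ A i := by
    intro i
    by_contra hno
    haveI : Nontrivial (Fin m) := Fin.nontrivial_iff_two_le.2 hm
    obtain ⟨j, hj⟩ := exists_ne i
    refine hac j ((hcy i j hj.symm).mono' ?_)
    rintro v (hv | hv)
    · exact absurd ⟨v, hv⟩ hno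
    · exact hv
  choose a ha using hnonempty
  have hinj : Function.Injective (fun i => (⟨c (a i), hmem _⟩ : I)) := by
    intro i j hij
    by_contra hne
    have hij' : c (a i) = c (a j) := congrArg Subtype.val hij
    refine hc1 (c (a i)) ((hcy i j hne).mono' ?_)
    rintro v (hv | hv)
    · exact hc2 i v hv _ (ha i)
    · exact (hc2 j v hv _ (ha j)).trans hij'.symm
  simpa using Fintype.card_le_of_injective _ hinj

/-- subgraph of edges within `S` other than `xy` -/
def cutGraph {V : Type*} (G : SimpleGraph V) (S : Set V) (x y : V) : SimpleGraph V where
  Adj a b := a ∈ S ∧ b ∈ S ∧ G.Adj a b ∧ s(a, b) ≠ s(x, y)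
  symm := ⟨fun a b ⟨h1, h2, h3, h4⟩ => ⟨h2, h1, h3.symm, by rwa [Sym2.eq_swap]⟩⟩
  loopless := ⟨fun a h => G.loopless.irrefl a h.2.2.1⟩

theorem exists_cut {V : Type*} (G : SimpleGraph V) (S : Set V)
    (h : ¬ (G.induce S).IsAcyclic) :
    ∃ x y, x ∈ S ∧ y ∈ S ∧ G.Adj x y ∧ (cutGraph G S x y).Reachable x y := by
  rw [SimpleGraph.isAcyclic_iff_forall_adj_isBridge] at h
  push Not at h
  obtain ⟨x, y, hxy, hb⟩ := h
  rw [SimpleGraph.isBridge_iff, not_not] at hb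
  refine ⟨x, y, x.2, y.2, hxy, ?_⟩
  refine hb.map (⟨Subtype.val, ?_⟩ : _ →g cutGraph G S x y)
  intro a b hab
  rw [SimpleGraph.deleteEdges_adj] at hab
  refine ⟨a.2, b.2, hab.1, ?_⟩
  intro he
  apply hab.2
  have := Sym2.map.injective Subtype.val_injective (a₁ := s(a,b)) (a₂ := s(x,y)) (by simpa using he)
  exact this

theorem reach_dir {V : Type*} (H : SimpleGraph V) (x : V) (R : V → V → Prop)
    (hR : ∀ a b, H.Adj a b → H.dist x a < H.dist x b → R a b) :
    ∀ n u, H.Reachable x u → H.dist x u = n → Relation.ReflTransGen R x u := by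
  intro n
  induction n with
  | zero =>
    intro u hu h
    rw [hu.dist_eq_zero_iff] at h
    subst h
    exact .refl
  | succ n ih =>
    intro u hu h
    obtain ⟨w, hw⟩ := hu.exists_walk_length_eq_dist
    have hnil : ¬ w.Nil := by
      intro hn
      rw [← SimpleGraph.Walk.length_eq_zero_iff] at hn
      omega
    have hadj := w.adj_penultimate hnil
    have hl : w.dropLast.length + 1 = w.length := by
      exact SimpleGraph.Walk.length_dropLast_add_one hnil
    have h1 := SimpleGraph.dist_le w.dropLast
    have h2 : H.dist x u ≤ H.dist x w.penultimate + 1 := by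
      obtain ⟨w', hw'⟩ := w.dropLast.reachable.exists_walk_length_eq_dist
      have := SimpleGraph.dist_le (w'.concat hadj)
      rw [SimpleGraph.Walk.length_concat] at this
      omega
    have h3 : H.dist x w.penultimate = n := by omega
    exact (ih _ w.dropLast.reachable h3).tail (hR _ _ hadj (by omega))

theorem key {V : Type} [Fintype V] (G : SimpleGraph V) {m : ℕ} (hm : 2 ≤ m)
    (S : Fin m × Fin m → Set V) (hS : ∀ p q v, v ∈ S p → v ∈ S q → p = q)
    (hcyc : ∀ p, ¬ (G.induce (S p)).IsAcyclic) :
    ∃ D, IsOrientation G D ∧ m ≤ adichromaticNumber D := by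
  classical
  choose x y hx hy hxy hr using fun p => exists_cut G (S p) (hcyc p)
  let pos : V → ℕ := fun u => if h : ∃ p, u ∈ S p then
    (cutGraph G (S h.choose) (x h.choose) (y h.choose)).dist (x h.choose) u else 0
  have hpos : ∀ p u, u ∈ S p → pos u = (cutGraph G (S p) (x p) (y p)).dist (x p) u := by
    intro p u hu
    have h : ∃ p, u ∈ S p := ⟨p, hu⟩
    simp only [pos, dif_pos h]
    rw [hS _ _ u h.choose_spec hu]
  let r : V → ℕ ×ₗ Fin (Fintype.card V) := fun u => toLex (pos u, Fintype.equivFin V u)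
  have hrinj : Function.Injective r := by
    intro u v h
    have := toLex.injective h
    exact (Fintype.equivFin V).injective (Prod.ext_iff.1 this).2
  have hrlt : ∀ u v, pos u < pos v → r u < r v := by
    intro u v h
    exact Prod.Lex.toLex_lt_toLex.2 (Or.inl h)
  let F : V → V → Prop := fun u v => ∃ p, p.1 ≠ p.2 ∧ s(u, v) = s(x p, y p)
  have hF : ∀ u v, F u v → F v u := by
    rintro u v ⟨p, h1, h2⟩
    exact ⟨p, h1, by rw [Sym2.eq_swap]; exact h2⟩
  let D : V → V → Prop := fun u v => G.Adj u v ∧ ((r u < r v ∧ ¬ F u v) ∨ (r v < r u ∧ F u v))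
  refine ⟨D, ⟨fun u v h => h.1, ?_⟩, ?_⟩
  · intro u v h
    have hne : r u ≠ r v := fun e => h.ne (hrinj e)
    have hFF : F u v ↔ F v u := ⟨hF u v, hF v u⟩
    simp only [D, h, h.symm, true_and, ← hFF]
    by_cases hf : F u v <;> simp only [hf, not_true, not_false_iff, and_true, and_false, or_false, false_or] <;>
    rcases lt_or_gt_of_ne hne with h1 | h1 <;> simp [Xor', h1, h1.le, h1.not_gt]
  · let A : Fin m → Set V := fun i => {u | ∃ p, p.1 ≠ p.2 ∧ u ∈ S p ∧
      ((u = x p ∧ i = p.1) ∨ (u ≠ x p ∧ i = p.2))}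
    have hcov : ∀ p : Fin m × Fin m, p.1 ≠ p.2 → S p ⊆ A p.1 ∪ A p.2 := by
      intro p hp u hu
      by_cases h : u = x p
      · exact Or.inl ⟨p, hp, hu, Or.inl ⟨h, rfl⟩⟩
      · exact Or.inr ⟨p, hp, hu, Or.inr ⟨h, rfl⟩⟩
    refine adi_lower D (fun v h => G.loopless.irrefl v h.1) hm A ?_ ?_ ?_
    · rintro i j v ⟨p, hp, hv, h⟩ ⟨q, hq, hv', h'⟩
      obtain rfl := hS _ _ _ hv hv'
      rcases h with ⟨h1, h2⟩ | ⟨h1, h2⟩ <;> rcases h' with ⟨h3, h4⟩ | ⟨h3, h4⟩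
      · rw [h2, h4]
      · exact absurd h1 h3
      · exact absurd h3 h1
      · rw [h2, h4]
    · rintro i ⟨v, hv⟩
      have hnF : ∀ a b, a ∈ A i → b ∈ A i → ¬ F a b := by
        have key : ∀ p : Fin m × Fin m, p.1 ≠ p.2 → x p ∈ A i → y p ∈ A i → False := by
          rintro p hp ⟨q, hq, h1, h2⟩ ⟨q', hq', h3, h4⟩
          obtain rfl := hS _ _ _ (hx p) h1
          obtain rfl := hS _ _ _ (hy p) h3
          have hne := (hxy p).ne'
          simp only [hne, false_and, ne_eq, not_false_eq_true, true_and, false_or, not_true,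
            or_false] at h2 h4
          exact hp (h2.symm.trans h4)
        rintro a b ha hb ⟨p, hp, he⟩
        rw [Sym2.eq_iff] at he
        rcases he with ⟨rfl, rfl⟩ | ⟨rfl, rfl⟩
        · exact key p hp ha hb
        · exact key p hp hb ha
      have : ∀ {a b : V}, Relation.TransGen
          (fun a b => a ∈ A i ∧ b ∈ A i ∧ D a b) a b → r a < r b := by
        intro a b hab
        have hstep : ∀ a b, (a ∈ A i ∧ b ∈ A i ∧ D a b) → r a < r b := by
          rintro a b ⟨ha, hb, -, h | h⟩
          · exact h.1
          · exact absurd h.2 (hnF a b ha hb)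
        induction hab with
        | single h => exact hstep _ _ h
        | tail _ h ih => exact ih.trans (hstep _ _ h)
      exact lt_irrefl _ (this hv)
    · intro i j hij
      refine HasDicycle.mono' (hcov (i, j) hij) ?_
      set p : Fin m × Fin m := (i, j) with hp
      have hpne : p.1 ≠ p.2 := hij
      have hpath := reach_dir (cutGraph G (S p) (x p) (y p)) (x p)
        (fun a b => a ∈ S p ∧ b ∈ S p ∧ D a b) (by
          rintro a b ⟨ha, hb, hab, hne⟩ hlt
          refine ⟨ha, hb, hab, Or.inl ⟨hrlt _ _ ?_, ?_⟩⟩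
          · rwa [hpos p a ha, hpos p b hb]
          · rintro ⟨q, hq, he⟩
            have : p = q := by
              rw [Sym2.eq_iff] at he
              rcases he with ⟨h1, -⟩ | ⟨h1, -⟩
              · exact hS _ _ a ha (h1 ▸ hx q)
              · exact hS _ _ a ha (h1 ▸ hy q)
            subst this
            exact hne he) _ (y p) (hr p) rfl
      refine ⟨x p, Relation.TransGen.tail' hpath ⟨hy p, hx p, (hxy p).symm, Or.inr ⟨hrlt _ _ ?_, ?_⟩⟩⟩
      · rw [hpos p _ (hx p), hpos p _ (hy p), SimpleGraph.dist_self]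
        exact (hr p).pos_dist_of_ne (hxy p).ne
      · exact ⟨p, hpne, Sym2.eq_swap⟩

/-- there is a function `h₂ : ℕ → ℕ` such that for every finite simple graph
`G`, `ava(G) ≤ h₂(M)`, where `M` is the maximum of `adi(D)` over all orientations `D`
of `G`. -/
theorem ava_bounded_by_max_orientation_adi :
    ∃ h₂ : ℕ → ℕ, ∀ (V : Type) [Fintype V] (G : SimpleGraph V) (M : ℕ),
      (∃ D : V → V → Prop, IsOrientation G D ∧ adichromaticNumber D = M) →
      (∀ D : V → V → Prop, IsOrientation G D → adichromaticNumber D ≤ M) →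
      avertexArboricity G ≤ h₂ M := by
  refine ⟨fun M => 2 * ((M + 2) * (M + 2)), ?_⟩
  intro V _ G M _ hM
  apply csSup_le'
  rintro k ⟨c, -, -, hc⟩
  by_contra hlt
  simp only [not_le] at hlt
  let N : Fin (M + 2) × Fin (M + 2) → ℕ := fun p => (finProdFinEquiv p).1
  have hN : ∀ p, N p < (M + 2) * (M + 2) := fun p => (finProdFinEquiv p).2
  have hNinj : ∀ p q, N p = N q → p = q := fun p q h => finProdFinEquiv.injective (Fin.ext h)
  let f : Fin (M + 2) × Fin (M + 2) → Fin k := fun p => ⟨2 * N p, by have := hN p; omega⟩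
  let g : Fin (M + 2) × Fin (M + 2) → Fin k := fun p => ⟨2 * N p + 1, by have := hN p; omega⟩
  obtain ⟨D, hD, hlow⟩ := key G (m := M + 2) (by omega)
    (fun p => c ⁻¹' {f p} ∪ c ⁻¹' {g p}) (by
      intro p q v hp hq
      apply hNinj
      simp only [Set.mem_union, Set.mem_preimage, Set.mem_singleton_iff, f, g, Fin.ext_iff] at hp hq
      omega) (by
      intro p
      apply hc
      simp [f, g])
  have := hM D hD
  omega
end
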